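/- Let G be a cactus graph on n vertices with k cycles. If G is not a squared chain, then there exists a squared chain G′ on n vertices with k cycles such that gpn(G′) > gpn(G). -/

import Mathlib

/-!
It suffices to show that a cactus maximising `gpn` among all cacti on `V` with `k` cycles is a
squared chain: if `G` had the same value as a maximiser, it would be a maximiser itself.
`T G`, the sum of the geodesic counts over ordered pairs, is `2 * gpn G - n`; a maximiser of it is
called `IsMax`, and the local structure of a maximiser is found by exchange arguments.

The basic exchange is `move G S u w`: here `S` is a part of `G` attached to the rest at the single
vertex `u` (`IsCut G u S`), and the part is detached from `u` and attached to `w`. Geodesic counts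
multiply across a cut vertex, so maximality says that no vertex `w` of the rest sees more
geodesics to the rest than `u` does (`IsMax.rho_le`), and that in case of equality the moved graph
is again a maximiser (`IsMax.move`). Two consequences are used throughout.

* `IsMax.no_third`: two parts attached at `u`, each with a vertex joined to `u` by at least
  two geodesics, make up the whole graph.
* `IsMax.slide`: if parts are attached at `u` and at `v` and there is just one geodesic from `u`
  to `v`, moving the first part to `v` gives a maximiser.

The conclusion is then reached as follows.

* `IsMax.girth`: a cycle of length at least five is replaced by a square `p x h z` on four of its
  vertices and edges from `h` to its other vertices (the graph `repl`), with the parts attached to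
  the cycle kept in place. Each vertex of a cycle has at most one other vertex to which there are
  two geodesics, while in `repl` there are two from `p` to every vertex but `x` and `z`. With `p`
  the vertex carrying the heaviest part, `T` strictly increases.
* `IsMax.not_ext`: adjacent vertices of a square do not both carry something, whence
  `IsMax.antipodal`. Indeed then all four would, and this persists after sliding the load of
  the first onto the second, which leaves the first without any load.
* `IsMax.two_squares`: by `no_third`, a vertex on two squares has no further edge; in particular
  no vertex is on three squares.
* `IsMax.squared_unique`: two vertices in one component of `G - E_S` are joined by one geodesic
  (`numGeo_unipath`). If both were on squares, sliding the part that contains one of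
  the squares to the other vertex would contradict `no_third`.
-/

open SimpleGraph

/-- The number of geodesics (shortest paths) in `G` between `u` and `v`. -/
noncomputable def numGeodesics {V : Type*} (G : SimpleGraph V) (u v : V) : ℕ :=
  {p : G.Walk u v | p.IsPath ∧ p.length = G.dist u v}.ncard

lemma numGeodesics_comm {V : Type*} (G : SimpleGraph V) (u v : V) :
    numGeodesics G u v = numGeodesics G v u := by
  have himg : {p : G.Walk v u | p.IsPath ∧ p.length = G.dist v u} =
      (fun p : G.Walk u v => p.reverse) '' {p : G.Walk u v | p.IsPath ∧ p.length = G.dist u v} := by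
    ext p
    constructor
    · rintro ⟨hp, hl⟩
      exact ⟨p.reverse, ⟨hp.reverse, by
        rw [SimpleGraph.Walk.length_reverse, hl, SimpleGraph.dist_comm]⟩, p.reverse_reverse⟩
    · rintro ⟨q, ⟨hq, hl⟩, rfl⟩
      exact ⟨hq.reverse, by rw [SimpleGraph.Walk.length_reverse, hl, SimpleGraph.dist_comm]⟩
  have hinj : Function.Injective (fun p : G.Walk u v => p.reverse) := by
    intro p q h
    simpa using congrArg SimpleGraph.Walk.reverse h
  unfold numGeodesics
  rw [himg, Set.ncard_image_of_injective _ hinj]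

/-- The geodesic subpath number of a finite graph: the sum, over unordered pairs of
distinct vertices, of the number of geodesics between them, plus `n` for the `n`
geodesics of length zero. -/
noncomputable def gpn {V : Type*} [Fintype V] [DecidableEq V] (G : SimpleGraph V) : ℕ :=
  (∑ e ∈ Finset.univ.filter (fun e : Sym2 V => ¬ e.IsDiag),
      Sym2.lift ⟨fun u v => numGeodesics G u v, fun u v => numGeodesics_comm G u v⟩ e)
    + Fintype.card V

/-- The cycles of `G`, recorded as their edge sets. -/
def cycleEdgeSets {V : Type*} (G : SimpleGraph V) : Set (Set (Sym2 V)) :=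
  {s | ∃ (u : V) (c : G.Walk u u), c.IsCycle ∧ s = {e | e ∈ c.edges}}

/-- A cactus graph: a connected graph in which all cycles are pairwise edge-disjoint. -/
def IsCactus {V : Type*} (G : SimpleGraph V) : Prop :=
  G.Connected ∧ (cycleEdgeSets G).Pairwise Disjoint

/-- A girth restricted cactus graph: every cycle is a triangle or a square. -/
def IsGirthRestricted {V : Type*} (G : SimpleGraph V) : Prop :=
  ∀ (u : V) (c : G.Walk u u), c.IsCycle → c.length = 3 ∨ c.length = 4

/-- A vertex of a cactus graph is cyclic if it lies on a cycle; it is active if moreover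
its degree is at least `3`. -/
def IsActiveVertex {V : Type*} (G : SimpleGraph V) (v : V) : Prop :=
  (∃ (u : V) (c : G.Walk u u), c.IsCycle ∧ v ∈ c.support) ∧ 3 ≤ (G.neighborSet v).ncard

/-- An antipodal cactus graph: a girth restricted cactus in which every multiactive
square (a `4`-cycle with at least two active vertices) is antipodal, i.e. it has exactly
two active vertices and they form an antipodal (opposite) pair of the square. -/
def IsAntipodalCactus {V : Type*} (G : SimpleGraph V) : Prop :=
  IsCactus G ∧ IsGirthRestricted G ∧
    ∀ (u : V) (c : G.Walk u u), c.IsCycle → c.length = 4 →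
      (∃ x y : V, x ≠ y ∧ x ∈ c.support ∧ y ∈ c.support ∧
        IsActiveVertex G x ∧ IsActiveVertex G y) →
      ∃ x y : V, x ≠ y ∧ x ∈ c.support ∧ y ∈ c.support ∧
        IsActiveVertex G x ∧ IsActiveVertex G y ∧ s(x, y) ∉ c.edges ∧
        ∀ z ∈ c.support, IsActiveVertex G z → z = x ∨ z = y

/-- The set `E_S` of edges of `G` which belong to squares (cycles of length `4`). -/
def squareEdges {V : Type*} (G : SimpleGraph V) : Set (Sym2 V) :=
  {e | ∃ (u : V) (c : G.Walk u u), c.IsCycle ∧ c.length = 4 ∧ e ∈ c.edges}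

/-- The squares of `G`, recorded as their edge sets. -/
def squareEdgeSets {V : Type*} (G : SimpleGraph V) : Set (Set (Sym2 V)) :=
  {s | ∃ (u : V) (c : G.Walk u u), c.IsCycle ∧ c.length = 4 ∧ s = {e | e ∈ c.edges}}

/-- A squared vertex: a vertex which belongs to a square. -/
def IsSquaredVertex {V : Type*} (G : SimpleGraph V) (v : V) : Prop :=
  ∃ (u : V) (c : G.Walk u u), c.IsCycle ∧ c.length = 4 ∧ v ∈ c.support

/-- The squares of `G` (as edge sets) which contain the vertex `v`. -/
def squaresOn {V : Type*} (G : SimpleGraph V) (v : V) : Set (Set (Sym2 V)) :=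
  {s ∈ squareEdgeSets G | ∃ e ∈ s, v ∈ e}

/-- A unipath resolved graph: an antipodal cactus graph in which every unipath structure
(non-trivial component of `G − E_S`) is good, i.e. contains at most one squared vertex,
and such a vertex belongs to exactly one square. -/
def IsUnipathResolved {V : Type*} (G : SimpleGraph V) : Prop :=
  IsAntipodalCactus G ∧
    ∀ C : (G.deleteEdges (squareEdges G)).ConnectedComponent, C.supp.Nontrivial →
      {v ∈ C.supp | IsSquaredVertex G v}.Subsingleton ∧
        ∀ v ∈ C.supp, IsSquaredVertex G v → (squaresOn G v).ncard = 1

/-- A squared chain: a unipath resolved cactus graph in which every multisquared vertex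
(a vertex on at least two squares) is bisquared (lies on exactly two squares). -/
def IsSquaredChain {V : Type*} (G : SimpleGraph V) : Prop :=
  IsUnipathResolved G ∧
    ∀ v : V, 2 ≤ (squaresOn G v).ncard → (squaresOn G v).ncard = 2

set_option linter.unusedSectionVars false

namespace Cactus

variable {V : Type*} [Fintype V] [DecidableEq V]

/-! ### Counting geodesics recursively -/

lemma numGeo_eq_pow (G : SimpleGraph V) [DecidableRel G.Adj] (x t : V) :
    numGeodesics G x t = ((G.adjMatrix ℕ) ^ (G.dist x t)) x t := by
  rw [adjMatrix_pow_apply_eq_card_walk, numGeodesics]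
  have : {p : G.Walk x t | p.IsPath ∧ p.length = G.dist x t} =
      {p : G.Walk x t | p.length = G.dist x t} := by
    ext p
    exact ⟨fun h => h.2, fun h => ⟨p.isPath_of_length_eq_dist h, h⟩⟩
  rw [this, ← Nat.card_coe_set_eq, Nat.card_eq_fintype_card, Nat.cast_id]

open Classical in
/-- The neighbours of `x` that are one step closer to `t`. -/
noncomputable def desc (G : SimpleGraph V) (x t : V) : Finset V :=
  Finset.univ.filter fun y => G.Adj x y ∧ G.dist y t + 1 = G.dist x t

@[simp] lemma mem_desc {G : SimpleGraph V} {x t y : V} :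
    y ∈ desc G x t ↔ G.Adj x y ∧ G.dist y t + 1 = G.dist x t := by
  simp [desc]

lemma numGeo_self (G : SimpleGraph V) (x : V) : numGeodesics G x x = 1 := by
  classical
  simp [numGeo_eq_pow]

lemma numGeo_rec {G : SimpleGraph V} (hG : G.Connected) {x t : V} (h : x ≠ t) :
    numGeodesics G x t = ∑ y ∈ desc G x t, numGeodesics G y t := by
  classical
  obtain ⟨n, hn⟩ : ∃ n, G.dist x t = n + 1 :=
    Nat.exists_eq_succ_of_ne_zero (hG.pos_dist_of_ne h).ne'
  rw [numGeo_eq_pow, hn, pow_succ', Matrix.mul_apply]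
  have key : ∀ y, (G.adjMatrix ℕ) x y * ((G.adjMatrix ℕ) ^ n) y t =
      if y ∈ desc G x t then numGeodesics G y t else 0 := by
    intro y
    simp only [mem_desc, adjMatrix_apply]
    by_cases hy : G.Adj x y
    · by_cases hd : G.dist y t + 1 = G.dist x t
      · have : G.dist y t = n := by omega
        simp [hy, numGeo_eq_pow, this, hn]
      · simp only [hy, hd, if_true, one_mul, and_false, if_false]
        rw [adjMatrix_pow_apply_eq_card_walk, Nat.cast_id, Fintype.card_eq_zero_iff]
        refine ⟨fun p => hd ?_⟩
        have h1 := G.dist_le p.1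
        have h2 : G.dist x t ≤ G.dist x y + G.dist y t := hG.dist_triangle
        have h3 : G.dist x y = 1 := dist_eq_one_iff_adj.2 hy
        have h4 := p.2
        simp only [Set.mem_ofPred_eq] at h4
        omega
    · simp [hy]
  rw [Finset.sum_congr rfl fun y _ => key y, Finset.sum_ite_mem, Finset.univ_inter]

lemma desc_nonempty {G : SimpleGraph V} (hG : G.Connected) {x t : V} (h : x ≠ t) :
    (desc G x t).Nonempty := by
  obtain ⟨p, hp⟩ := hG.exists_walk_length_eq_dist x t
  cases p with
  | nil => exact absurd rfl h
  | @cons _ y _ hadj q =>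
    refine ⟨y, mem_desc.2 ⟨hadj, ?_⟩⟩
    have h1 := G.dist_le q
    have h2 : G.dist x t ≤ G.dist x y + G.dist y t := hG.dist_triangle
    have h3 : G.dist x y = 1 := dist_eq_one_iff_adj.2 hadj
    simp only [Walk.length_cons] at hp
    omega

lemma numGeo_pos {G : SimpleGraph V} (hG : G.Connected) (x t : V) :
    1 ≤ numGeodesics G x t := by
  induction hn : G.dist x t using Nat.strong_induction_on generalizing x with
  | _ n ih =>
    by_cases h : x = t
    · subst h; rw [numGeo_self]
    · rw [numGeo_rec hG h]
      obtain ⟨y, hy⟩ := desc_nonempty hG h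
      have hy' := mem_desc.1 hy
      exact (ih _ (by omega) y rfl).trans
        (Finset.single_le_sum (f := fun y => numGeodesics G y t) (fun _ _ => Nat.zero_le _) hy)

lemma numGeo_adj {G : SimpleGraph V} (hG : G.Connected) {x t : V} (h : G.Adj x t) :
    numGeodesics G x t = 1 := by
  have h1 : G.dist x t = 1 := dist_eq_one_iff_adj.2 h
  have : desc G x t = {t} := by
    ext y
    simp only [mem_desc, h1, Finset.mem_singleton]
    constructor
    · rintro ⟨-, h2⟩
      exact (hG.dist_eq_zero_iff).1 (by omega)
    · rintro rfl
      simp [h]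
  rw [numGeo_rec hG h.ne, this, Finset.sum_singleton, numGeo_self]

/-- Two non-adjacent vertices with two common neighbours are joined by two geodesics. -/
lemma two_le_numGeo {G : SimpleGraph V} (hG : G.Connected) {a b c d : V} (hac : a ≠ c)
    (hn : ¬ G.Adj a c) (hab : G.Adj a b) (hbc : G.Adj b c) (had : G.Adj a d) (hdc : G.Adj d c)
    (hbd : b ≠ d) : 2 ≤ numGeodesics G a c := by
  have h1 : G.dist a c = 2 := by
    have h2 : G.dist a c ≤ 2 := G.dist_le (Walk.cons hab (Walk.cons hbc Walk.nil))
    have := hG.one_lt_dist_of_ne_of_not_adj hac hn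
    omega
  have hsub : ({b, d} : Finset V) ⊆ desc G a c := by
    intro y hy
    simp only [Finset.mem_insert, Finset.mem_singleton] at hy
    rcases hy with rfl | rfl
    · simp [hab, h1, dist_eq_one_iff_adj.2 hbc]
    · simp [had, h1, dist_eq_one_iff_adj.2 hdc]
  rw [numGeo_rec hG hac]
  refine le_trans ?_ (Finset.sum_le_sum_of_subset hsub)
  rw [Finset.sum_pair hbd, numGeo_adj hG hbc, numGeo_adj hG hdc]

/-! ### Cuts at a vertex -/

/-- `S` is a union of `u` with branches of `G` at `u`: no edge of `G` leaves `S` except at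
`u`. -/
structure IsCut (G : SimpleGraph V) (u : V) (S : Finset V) : Prop where
  mem : u ∈ S
  adj : ∀ x ∈ S, ∀ y ∉ S, G.Adj x y → x = u

lemma IsCut.compl {G : SimpleGraph V} {u : V} {S : Finset V} (h : IsCut G u S) :
    IsCut G u (S.erase u)ᶜ := by
  refine ⟨by simp, fun x hx y hy hxy => ?_⟩
  simp only [Finset.mem_erase, Finset.mem_compl, not_not] at hx hy
  by_contra hne
  exact hx ⟨hne, by_contra fun hxS => hy.1 (h.adj y hy.2 x hxS hxy.symm)⟩

lemma IsCut.mem_support {G : SimpleGraph V} {u : V} {S : Finset V} (h : IsCut G u S)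
    {x t : V} (p : G.Walk x t) (hx : x ∈ S) (ht : t ∉ S) : u ∈ p.support := by
  induction p with
  | nil => exact absurd hx ht
  | @cons x y t hadj q ih =>
    by_cases hy : y ∈ S
    · simp [ih hy ht]
    · simp [h.adj x hx y hy hadj]

lemma IsCut.dist {G : SimpleGraph V} (hG : G.Connected) {u : V} {S : Finset V}
    (h : IsCut G u S) {x t : V} (hx : x ∈ S) (ht : t ∈ S → t = u) :
    G.dist x t = G.dist x u + G.dist u t := by
  by_cases htS : t ∈ S
  · simp [ht htS]
  · refine le_antisymm hG.dist_triangle ?_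
    obtain ⟨p, hp⟩ := hG.exists_walk_length_eq_dist x t
    have hu := h.mem_support p hx htS
    have h1 := G.dist_le (p.takeUntil u hu)
    have h2 := G.dist_le (p.dropUntil u hu)
    have h3 := congrArg Walk.length (p.take_spec hu)
    rw [Walk.length_append] at h3
    omega

/-- Geodesic counts multiply across a cut vertex, since every geodesic from one side to the other
passes through it. -/
lemma IsCut.numGeo {G : SimpleGraph V} (hG : G.Connected) {u : V} {S : Finset V}
    (h : IsCut G u S) {x t : V} (hx : x ∈ S) (ht : t ∈ S → t = u) :
    numGeodesics G x t = numGeodesics G x u * numGeodesics G u t := by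
  induction hn : G.dist x u using Nat.strong_induction_on generalizing x with
  | _ n ih =>
    by_cases hxu : x = u
    · subst hxu; rw [numGeo_self, one_mul]
    · have hxt : x ≠ t := by rintro rfl; exact hxu (ht hx)
      have hnb : ∀ y, G.Adj x y → y ∈ S := fun y hy => by
        by_contra hyS
        exact hxu (h.adj x hx y hyS hy)
      have hd : desc G x t = desc G x u := by
        ext y
        simp only [mem_desc]
        refine and_congr_right fun hy => ?_
        rw [h.dist hG hx ht, h.dist hG (hnb y hy) ht]
        omega
      rw [numGeo_rec hG hxt, numGeo_rec hG hxu, hd, Finset.sum_mul]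
      refine Finset.sum_congr rfl fun y hy => ?_
      have hy' := mem_desc.1 hy
      exact ih _ (by omega) (hnb y hy'.1) rfl

lemma IsCut.desc_subset {G : SimpleGraph V} (hG : G.Connected) {u : V} {S : Finset V}
    (h : IsCut G u S) {x t y : V} (hx : x ∈ S) (ht : t ∈ S) (hy : y ∈ desc G x t) : y ∈ S := by
  by_contra hyS
  have hy' := mem_desc.1 hy
  have hxu := h.adj x hx y hyS hy'.1
  subst hxu
  have := h.dist hG ht (t := y) (fun h => absurd h hyS)
  rw [G.dist_comm (u := t) (v := y), G.dist_comm (u := t) (v := x)] at this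
  omega

/-- Distances and numbers of geodesics inside a union of branches depend only on the graph
induced on it. -/
lemma transport_dist_le {G G' : SimpleGraph V} (hG : G.Connected) (hG' : G'.Connected)
    {u : V} {S : Finset V} (φ : V → V) (h : IsCut G u S)
    (hadj : ∀ x ∈ S, ∀ y ∈ S, G.Adj x y → G'.Adj (φ x) (φ y)) {x t : V} (hx : x ∈ S)
    (ht : t ∈ S) : G'.dist (φ x) (φ t) ≤ G.dist x t := by
  induction hn : G.dist x t using Nat.strong_induction_on generalizing x with
  | _ n ih =>
    by_cases hxt : x = t
    · subst hxt; simp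
    · obtain ⟨y, hy⟩ := desc_nonempty hG hxt
      have hyS := h.desc_subset hG hx ht hy
      have hy' := mem_desc.1 hy
      have h1 := ih _ (by omega) hyS rfl
      have h2 : G'.dist (φ x) (φ t) ≤ G'.dist (φ x) (φ y) + G'.dist (φ y) (φ t) :=
        hG'.dist_triangle
      have h3 : G'.dist (φ x) (φ y) = 1 := dist_eq_one_iff_adj.2 (hadj x hx y hyS hy'.1)
      omega

/-- The part of a graph behind a cut vertex determines the distances and geodesic counts inside
it; the permutation `φ` identifies such a part of `G` with one of `G'`. -/
lemma transport {G G' : SimpleGraph V} (hG : G.Connected) (hG' : G'.Connected)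
    {u u' : V} {S S' : Finset V} (φ : Equiv.Perm V) (h : IsCut G u S) (h' : IsCut G' u' S')
    (hS : ∀ x, φ x ∈ S' ↔ x ∈ S)
    (hadj : ∀ x ∈ S, ∀ y ∈ S, (G.Adj x y ↔ G'.Adj (φ x) (φ y))) {x t : V} (hx : x ∈ S)
    (ht : t ∈ S) : G'.dist (φ x) (φ t) = G.dist x t ∧
      numGeodesics G' (φ x) (φ t) = numGeodesics G x t := by
  have hdist : ∀ x ∈ S, G'.dist (φ x) (φ t) = G.dist x t := by
    intro x hx
    refine le_antisymm (transport_dist_le hG hG' φ h (fun x hx y hy => (hadj x hx y hy).1) hx ht) ?_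
    have := transport_dist_le hG' hG φ.symm h' (fun a ha b hb hab => ?_)
      ((hS x).2 hx) ((hS t).2 ht)
    · simpa using this
    · obtain ⟨a, rfl⟩ := φ.surjective a
      obtain ⟨b, rfl⟩ := φ.surjective b
      simpa using (hadj a ((hS a).1 ha) b ((hS b).1 hb)).2 hab
  refine ⟨hdist x hx, ?_⟩
  induction hn : G.dist x t using Nat.strong_induction_on generalizing x with
  | _ n ih =>
    by_cases hxt : x = t
    · subst hxt; simp [numGeo_self]
    · rw [numGeo_rec hG hxt, numGeo_rec hG' (φ.injective.ne hxt)]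
      symm
      refine Finset.sum_nbij φ ?_ φ.injective.injOn ?_ ?_
      · intro y hy
        have hyS := h.desc_subset hG hx ht hy
        have hy' := mem_desc.1 hy
        rw [mem_desc, hdist y hyS, hdist x hx]
        exact ⟨(hadj x hx y hyS).1 hy'.1, hy'.2⟩
      · intro z hz
        obtain ⟨y, rfl⟩ := φ.surjective z
        have hyS := (hS y).1 (h'.desc_subset hG' ((hS x).2 hx) ((hS t).2 ht) hz)
        have hz' := mem_desc.1 hz
        rw [hdist y hyS, hdist x hx] at hz'
        exact ⟨y, by simpa using ⟨(hadj x hx y hyS).2 hz'.1, hz'.2⟩, rfl⟩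
      · intro y hy
        have hyS := h.desc_subset hG hx ht hy
        have hy' := mem_desc.1 hy
        exact (ih _ (by omega) hyS rfl).symm

/-! ### Cycles and cuts -/

/-- The edge sets of the cycles of `G` whose vertices all lie in `S`. -/
def cyc (G : SimpleGraph V) (S : Finset V) : Set (Set (Sym2 V)) :=
  {s | ∃ (u : V) (c : G.Walk u u), c.IsCycle ∧ (∀ x ∈ c.support, x ∈ S) ∧ s = {e | e ∈ c.edges}}

lemma cyc_subset (G : SimpleGraph V) (S : Finset V) : cyc G S ⊆ cycleEdgeSets G :=
  fun _ ⟨u, c, hc, _, hs⟩ => ⟨u, c, hc, hs⟩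

lemma cyc_nonempty {G : SimpleGraph V} {S : Finset V} {s : Set (Sym2 V)} (hs : s ∈ cyc G S) :
    s.Nonempty := by
  obtain ⟨u, c, hc, -, rfl⟩ := hs
  cases c with
  | nil => exact absurd hc (by simp)
  | cons h p => exact ⟨_, List.mem_cons_self ..⟩

lemma cyc_mem {G : SimpleGraph V} {S : Finset V} {s : Set (Sym2 V)} (hs : s ∈ cyc G S)
    {x y : V} (he : s(x, y) ∈ s) : G.Adj x y ∧ x ∈ S ∧ y ∈ S := by
  obtain ⟨u, c, hc, hS, rfl⟩ := hs
  exact ⟨c.adj_of_mem_edges he, hS _ (c.fst_mem_support_of_mem_edges he),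
    hS _ (c.snd_mem_support_of_mem_edges he)⟩

/-- Cycles sharing at most one vertex have no common edge. -/
lemma cyc_disjoint {G : SimpleGraph V} {S S' : Finset V} {u : V}
    (h : ∀ x ∈ S, x ∈ S' → x = u) {s t : Set (Sym2 V)} (hs : s ∈ cyc G S) (ht : t ∈ cyc G S') :
    Disjoint s t := by
  rw [Set.disjoint_left]
  intro e he he'
  induction e with
  | _ x y =>
    obtain ⟨h1, h2, h3⟩ := cyc_mem hs he
    obtain ⟨-, h4, h5⟩ := cyc_mem ht he'
    exact h1.ne ((h x h2 h4).trans (h y h3 h5).symm)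

/-- A cycle does not pass through a cut vertex to the other side. -/
lemma IsCut.cycle {G : SimpleGraph V} {u : V} {S : Finset V} (h : IsCut G u S) {v : V}
    {c : G.Walk v v} (hc : c.IsCycle) :
    (∀ x ∈ c.support, x ∈ S) ∨ (∀ x ∈ c.support, x ∈ (S.erase u)ᶜ) := by
  by_contra! hcon
  obtain ⟨⟨y, hy, hyS⟩, x, hx, hxS⟩ := hcon
  simp only [Finset.mem_compl, Finset.mem_erase, not_not] at hxS
  set d := c.rotate x hx with hd
  have hdc : d.IsCycle := hc.rotate hx
  have hyd : y ∈ d.support := by rwa [hd, Walk.mem_support_rotate_iff]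
  have h1 := h.mem_support (d.takeUntil y hyd) hxS.2 hyS
  have h2 := h.mem_support (d.dropUntil y hyd).reverse hxS.2 hyS
  rw [Walk.support_reverse, List.mem_reverse] at h2
  have h3 := hdc.support_nodup
  rw [← d.take_spec hyd, Walk.tail_support_append] at h3
  rw [Walk.mem_support_iff] at h1 h2
  have huy : u ≠ y := fun e => hyS (e ▸ h.mem)
  exact (List.disjoint_of_nodup_append h3) (h1.resolve_left (Ne.symm hxS.1)) (h2.resolve_left huy)

lemma IsCut.cycleEdgeSets {G : SimpleGraph V} {u : V} {S : Finset V} (h : IsCut G u S) :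
    cycleEdgeSets G = cyc G S ∪ cyc G (S.erase u)ᶜ := by
  refine Set.Subset.antisymm ?_ (Set.union_subset (cyc_subset _ _) (cyc_subset _ _))
  rintro s ⟨v, c, hc, rfl⟩
  exact (h.cycle hc).imp (fun h => ⟨v, c, hc, h, rfl⟩) (fun h => ⟨v, c, hc, h, rfl⟩)

lemma cyc_map {G G' : SimpleGraph V} {S S' : Finset V} (φ : Equiv.Perm V)
    (hS : ∀ x, x ∈ S → φ x ∈ S')
    (hadj : ∀ x ∈ S, ∀ y ∈ S, G.Adj x y → G'.Adj (φ x) (φ y)) {s : Set (Sym2 V)}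
    (hs : s ∈ cyc G S) : Sym2.map φ '' s ∈ cyc G' S' := by
  obtain ⟨u, c, hc, hcS, rfl⟩ := hs
  let H : SimpleGraph V :=
    { Adj := fun x y => G.Adj x y ∧ x ∈ S ∧ y ∈ S
      symm := ⟨fun _ _ h => ⟨h.1.symm, h.2.2, h.2.1⟩⟩
      loopless := ⟨fun _ h => h.1.ne rfl⟩ }
  have hH : ∀ e ∈ c.edges, e ∈ H.edgeSet := by
    intro e he
    induction e with
    | _ x y =>
      exact ⟨c.adj_of_mem_edges he, hcS _ (c.fst_mem_support_of_mem_edges he),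
        hcS _ (c.snd_mem_support_of_mem_edges he)⟩
  let f : H →g G' := ⟨φ, fun {x y} h => hadj x h.2.1 y h.2.2 h.1⟩
  have hf : Function.Injective f := φ.injective
  refine ⟨_, (c.transfer H hH).map f, (Walk.isCycle_map_iff_of_injective hf).2 (hc.transfer hH),
    ?_, ?_⟩
  · intro x hx
    rw [Walk.support_map, Walk.support_transfer, List.mem_map] at hx
    obtain ⟨y, hy, rfl⟩ := hx
    exact hS y (hcS y hy)
  · ext e
    simp [Walk.edges_map, f]

lemma cyc_eq_image {G G' : SimpleGraph V} {S S' : Finset V} (φ : Equiv.Perm V)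
    (hS : ∀ x, φ x ∈ S' ↔ x ∈ S)
    (hadj : ∀ x ∈ S, ∀ y ∈ S, (G.Adj x y ↔ G'.Adj (φ x) (φ y))) :
    cyc G' S' = (fun s => Sym2.map φ '' s) '' cyc G S := by
  refine Set.Subset.antisymm (fun s hs => ?_) ?_
  · refine ⟨Sym2.map φ.symm '' s, cyc_map φ.symm (fun x hx => ?_) (fun x hx y hy h => ?_) hs, ?_⟩
    · exact (hS _).1 (by simpa using hx)
    · refine (hadj _ ((hS _).1 (by simpa using hx)) _ ((hS _).1 (by simpa using hy))).2 ?_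
      simpa using h
    · simp only [← Set.image_comp, ← Sym2.map_comp]
      simp
  · rintro _ ⟨s, hs, rfl⟩
    exact cyc_map φ (fun x => (hS x).2) (fun x hx y hy => (hadj x hx y hy).1) hs

lemma cyc_congr {G G' : SimpleGraph V} {S : Finset V}
    (hadj : ∀ x ∈ S, ∀ y ∈ S, (G.Adj x y ↔ G'.Adj x y)) : cyc G' S = cyc G S := by
  rw [cyc_eq_image (Equiv.refl V) (fun x => Iff.rfl) hadj]
  simp

/-! ### Moving branches from one vertex to another -/

lemma reach_of_cut {G G' : SimpleGraph V} (hG : G.Connected) {u : V} {S : Finset V}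
    (φ : V → V) (h : IsCut G u S)
    (hadj : ∀ x ∈ S, ∀ y ∈ S, G.Adj x y → G'.Adj (φ x) (φ y)) {x t : V} (hx : x ∈ S)
    (ht : t ∈ S) : G'.Reachable (φ x) (φ t) := by
  induction hn : G.dist x t using Nat.strong_induction_on generalizing x with
  | _ n ih =>
    by_cases hxt : x = t
    · subst hxt; exact Reachable.refl _
    · obtain ⟨y, hy⟩ := desc_nonempty hG hxt
      have hyS := h.desc_subset hG hx ht hy
      have hy' := mem_desc.1 hy
      exact (hadj x hx y hyS hy'.1).reachable.trans (ih _ (by omega) hyS rfl)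

/-- The sum of the numbers of geodesics over ordered pairs of vertices. -/
noncomputable def T (G : SimpleGraph V) : ℕ := ∑ x, ∑ y, numGeodesics G x y

/-- The number of geodesics from `x` into `S`. -/
noncomputable def rho (G : SimpleGraph V) (S : Finset V) (x : V) : ℕ :=
  ∑ y ∈ S, numGeodesics G x y

/-- The graph obtained from `G` by detaching the branches `S` from `u` and attaching them to
`w`. -/
def move (G : SimpleGraph V) (S : Finset V) (u w : V) : SimpleGraph V where
  Adj x y := (x ∉ S.erase u ∧ y ∉ S.erase u ∧ G.Adj x y) ∨
    (x ∈ insert w (S.erase u) ∧ y ∈ insert w (S.erase u) ∧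
      G.Adj (Equiv.swap u w x) (Equiv.swap u w y))
  symm := ⟨fun _ _ h => h.imp (fun h => ⟨h.2.1, h.1, h.2.2.symm⟩)
    (fun h => ⟨h.2.1, h.1, h.2.2.symm⟩)⟩
  loopless := ⟨fun _ h => h.elim (fun h => h.2.2.ne rfl) (fun h => h.2.2.ne rfl)⟩

section Move

variable {G : SimpleGraph V} {S : Finset V} {u w : V}

lemma move_cut : IsCut (move G S u w) w (insert w (S.erase u)) := by
  refine ⟨by simp, fun x hx y hy hxy => ?_⟩
  rcases hxy with h | h
  · rcases Finset.mem_insert.1 hx with h' | h'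
    · exact h'
    · exact absurd h' h.1
  · exact absurd h.2.1 hy

lemma move_erase (hw : w ∉ S) : (insert w (S.erase u)).erase w = S.erase u :=
  Finset.erase_insert (fun h => hw (Finset.mem_of_mem_erase h))

lemma move_cut' (hw : w ∉ S) : IsCut (move G S u w) w (S.erase u)ᶜ := by
  have := (move_cut (G := G) (S := S) (u := u) (w := w)).compl
  rwa [move_erase hw] at this

lemma move_mem (hu : u ∈ S) (hw : w ∉ S) (x : V) :
    Equiv.swap u w x ∈ insert w (S.erase u) ↔ x ∈ S := by
  have huw : u ≠ w := fun h => hw (h ▸ hu)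
  rcases eq_or_ne x u with rfl | h1
  · simp [hu]
  rcases eq_or_ne x w with rfl | h2
  · simp [hw, huw]
  · rw [Equiv.swap_apply_of_ne_of_ne h1 h2]
    simp [h1, h2]

lemma move_mem' (hu : u ∈ S) (hw : w ∉ S) (x : V) :
    Equiv.swap u w x ∈ S ↔ x ∈ insert w (S.erase u) := by
  rw [← move_mem hu hw, Equiv.swap_apply_self]

lemma move_swap (hw : w ∉ S) {x : V} (hx : x ∈ S.erase u) : Equiv.swap u w x = x :=
  Equiv.swap_apply_of_ne_of_ne (Finset.ne_of_mem_erase hx)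
    (fun h => hw (h ▸ Finset.mem_of_mem_erase hx))

lemma move_adj_near (hu : u ∈ S) (hw : w ∉ S) {x y : V} (hx : x ∈ S) (hy : y ∈ S) :
    G.Adj x y ↔ (move G S u w).Adj (Equiv.swap u w x) (Equiv.swap u w y) := by
  constructor
  · intro h
    exact Or.inr ⟨(move_mem hu hw x).2 hx, (move_mem hu hw y).2 hy, by
      simpa only [Equiv.swap_apply_self]⟩
  · rintro (h | h)
    · have h1 := (move_mem hu hw x).2 hx
      have h2 := (move_mem hu hw y).2 hy
      rw [Finset.mem_insert] at h1 h2
      exact absurd ((h1.resolve_right h.1).trans (h2.resolve_right h.2.1).symm) h.2.2.ne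
    · simpa only [Equiv.swap_apply_self] using h.2.2

lemma move_adj_far {x y : V} (hx : x ∈ (S.erase u)ᶜ) (hy : y ∈ (S.erase u)ᶜ) :
    G.Adj x y ↔ (move G S u w).Adj x y := by
  rw [Finset.mem_compl] at hx hy
  constructor
  · intro h
    exact Or.inl ⟨hx, hy, h⟩
  · rintro (h | h)
    · exact h.2.2
    · obtain ⟨h1, h2, h3⟩ := h
      rw [Finset.mem_insert] at h1 h2
      obtain rfl := h1.resolve_right hx
      obtain rfl := h2.resolve_right hy
      exact absurd rfl h3.ne

lemma move_connected (hG : G.Connected) (h : IsCut G u S) (hw : w ∉ S) :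
    (move G S u w).Connected := by
  have hr : ∀ x, (move G S u w).Reachable x w := by
    intro x
    by_cases hx : x ∈ S.erase u
    · have := reach_of_cut (G' := move G S u w) hG (Equiv.swap u w) h
        (fun x hx y hy => (move_adj_near h.mem hw hx hy).1) (Finset.mem_of_mem_erase hx) h.mem
      rwa [move_swap hw hx, Equiv.swap_apply_left] at this
    · exact reach_of_cut (G' := move G S u w) hG id h.compl
        (fun x hx y hy => (move_adj_far hx hy).1) (Finset.mem_compl.2 hx)
        (Finset.mem_compl.2 fun h => hw (Finset.mem_of_mem_erase h))
  have : Nonempty V := ⟨u⟩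
  exact ⟨fun x y => (hr x).trans (hr y).symm⟩

lemma move_cycle (h : IsCut G u S) (hw : w ∉ S) : cycleEdgeSets (move G S u w) =
    (fun s => Sym2.map (Equiv.swap u w) '' s) '' cyc G S ∪ cyc G (S.erase u)ᶜ := by
  rw [(move_cut (G := G) (S := S) (u := u) (w := w)).cycleEdgeSets, move_erase hw,
    cyc_eq_image (Equiv.swap u w) (move_mem h.mem hw)
      (fun x hx y hy => move_adj_near h.mem hw hx hy),
    cyc_congr (fun x hx y hy => move_adj_far (w := w) hx hy)]

lemma image_inj (φ : Equiv.Perm V) :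
    Function.Injective (fun s : Set (Sym2 V) => Sym2.map φ '' s) :=
  (Set.image_injective).2 (Sym2.map.injective φ.injective)

lemma sep (x : V) (h1 : x ∈ S) (h2 : x ∈ (S.erase u)ᶜ) : x = u := by
  simp only [Finset.mem_compl, Finset.mem_erase, not_and] at h2
  by_contra h
  exact h2 h h1

lemma disjoint_sides {S S' : Finset V} (h : ∀ x ∈ S, x ∈ S' → x = u) :
    Disjoint (cyc G S) (cyc G S') := by
  rw [Set.disjoint_left]
  intro s hs hs'
  have := cyc_disjoint h hs hs'
  rw [disjoint_self] at this
  exact (cyc_nonempty hs).ne_empty this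

lemma pairwise_union {S S' : Finset V} (h : ∀ x ∈ S, x ∈ S' → x = u)
    (h1 : (cyc G S).Pairwise Disjoint) (h2 : (cyc G S').Pairwise Disjoint) :
    (cyc G S ∪ cyc G S').Pairwise Disjoint := by
  rintro s (hs | hs) t (ht | ht) hst
  · exact h1 hs ht hst
  · exact cyc_disjoint h hs ht
  · exact (cyc_disjoint h ht hs).symm
  · exact h2 hs ht hst

lemma move_cactus (hG : IsCactus G) (h : IsCut G u S) (hw : w ∉ S) :
    IsCactus (move G S u w) := by
  refine ⟨move_connected hG.1 h hw, ?_⟩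
  have hc := (move_cut (G := G) (S := S) (u := u) (w := w)).cycleEdgeSets
  rw [hc]
  refine pairwise_union (u := w) (fun x => sep x) ?_ ?_
  · rw [cyc_eq_image (Equiv.swap u w) (move_mem h.mem hw)
      (fun x hx y hy => move_adj_near h.mem hw hx hy)]
    rintro _ ⟨s, hs, rfl⟩ _ ⟨t, ht, rfl⟩ hst
    exact (Set.disjoint_image_iff (Sym2.map.injective (Equiv.injective _))).2
      (hG.2 (cyc_subset _ _ hs) (cyc_subset _ _ ht) (fun e => hst (by rw [e])))
  · rw [move_erase hw, cyc_congr (fun x hx y hy => move_adj_far (w := w) hx hy)]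
    exact hG.2.mono (cyc_subset _ _)

lemma move_ncard (h : IsCut G u S) (hw : w ∉ S) :
    (cycleEdgeSets (move G S u w)).ncard = (cycleEdgeSets G).ncard := by
  have hc := (move_cut (G := G) (S := S) (u := u) (w := w)).cycleEdgeSets
  rw [hc, h.cycleEdgeSets, Set.ncard_union_eq (disjoint_sides (u := w) fun x => sep x),
    Set.ncard_union_eq (disjoint_sides (u := u) fun x => sep x), move_erase hw,
    cyc_eq_image (Equiv.swap u w) (move_mem h.mem hw)
      (fun x hx y hy => move_adj_near h.mem hw hx hy),
    cyc_congr (fun x hx y hy => move_adj_far (w := w) hx hy),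
    Set.ncard_image_of_injective _ (image_inj _)]

lemma move_numGeo_far (hG : G.Connected) (h : IsCut G u S) (hw : w ∉ S) {x y : V}
    (hx : x ∈ (S.erase u)ᶜ) (hy : y ∈ (S.erase u)ᶜ) :
    numGeodesics (move G S u w) x y = numGeodesics G x y :=
  (transport hG (move_connected hG h hw) (Equiv.refl V) h.compl (move_cut' hw) (fun _ => Iff.rfl)
    (fun _ hx _ hy => move_adj_far hx hy) hx hy).2

lemma move_numGeo_near (hG : G.Connected) (h : IsCut G u S) (hw : w ∉ S) {x y : V}
    (hx : x ∈ S) (hy : y ∈ S) :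
    numGeodesics (move G S u w) (Equiv.swap u w x) (Equiv.swap u w y) = numGeodesics G x y :=
  (transport hG (move_connected hG h hw) (Equiv.swap u w) h move_cut (move_mem h.mem hw)
    (fun _ hx _ hy => move_adj_near h.mem hw hx hy) hx hy).2

/-- The ordered geodesic count splits along a cut vertex; the cut vertex itself is counted with
the far side. -/
lemma T_cut (hG : G.Connected) (h : IsCut G u S) :
    T G = (∑ x ∈ S.erase u, ∑ y ∈ S.erase u, numGeodesics G x y) +
      (∑ x ∈ (S.erase u)ᶜ, ∑ y ∈ (S.erase u)ᶜ, numGeodesics G x y) +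
      2 * ((∑ x ∈ S.erase u, numGeodesics G x u) * rho G (S.erase u)ᶜ u) := by
  have key : ∑ x ∈ S.erase u, ∑ y ∈ (S.erase u)ᶜ, numGeodesics G x y =
      (∑ x ∈ S.erase u, numGeodesics G x u) * rho G (S.erase u)ᶜ u := by
    rw [rho, Finset.sum_mul_sum]
    refine Finset.sum_congr rfl fun x hx => Finset.sum_congr rfl fun y hy => ?_
    exact h.numGeo hG (Finset.mem_of_mem_erase hx) (fun hyS => sep y hyS hy)
  have key2 : ∑ x ∈ (S.erase u)ᶜ, ∑ y ∈ S.erase u, numGeodesics G x y =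
      (∑ x ∈ S.erase u, numGeodesics G x u) * rho G (S.erase u)ᶜ u := by
    rw [← key, Finset.sum_comm]
    exact Finset.sum_congr rfl fun x _ => Finset.sum_congr rfl fun y _ => numGeodesics_comm ..
  have hsplit : ∀ f : V → ℕ, ∑ x, f x = ∑ x ∈ S.erase u, f x + ∑ x ∈ (S.erase u)ᶜ, f x :=
    fun f => (Finset.sum_add_sum_compl _ f).symm
  rw [T, hsplit]
  simp only [hsplit, Finset.sum_add_distrib] at *
  rw [key, key2]
  ring

/-- Moving a branch from `u` to `w` changes the count only through the weight seen from the new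
attachment vertex. -/
lemma T_move (hG : G.Connected) (h : IsCut G u S) (hw : w ∉ S) :
    T (move G S u w) + 2 * ((∑ x ∈ S.erase u, numGeodesics G x u) * rho G (S.erase u)ᶜ u) =
      T G + 2 * ((∑ x ∈ S.erase u, numGeodesics G x u) * rho G (S.erase u)ᶜ w) := by
  have hwA : w ∈ (S.erase u)ᶜ := Finset.mem_compl.2 fun h => hw (Finset.mem_of_mem_erase h)
  rw [T_cut (move_connected hG h hw) (move_cut (S := S) (u := u)), T_cut hG h, move_erase hw]
  have h1 : ∑ x ∈ S.erase u, ∑ y ∈ S.erase u, numGeodesics (move G S u w) x y =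
      ∑ x ∈ S.erase u, ∑ y ∈ S.erase u, numGeodesics G x y := by
    refine Finset.sum_congr rfl fun x hx => Finset.sum_congr rfl fun y hy => ?_
    have := move_numGeo_near hG h hw (Finset.mem_of_mem_erase hx) (Finset.mem_of_mem_erase hy)
    rwa [move_swap hw hx, move_swap hw hy] at this
  have h2 : ∑ x ∈ S.erase u, numGeodesics (move G S u w) x w =
      ∑ x ∈ S.erase u, numGeodesics G x u := by
    refine Finset.sum_congr rfl fun x hx => ?_
    have := move_numGeo_near hG h hw (Finset.mem_of_mem_erase hx) h.mem
    rwa [move_swap hw hx, Equiv.swap_apply_left] at this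
  have h3 : ∑ x ∈ (S.erase u)ᶜ, ∑ y ∈ (S.erase u)ᶜ, numGeodesics (move G S u w) x y =
      ∑ x ∈ (S.erase u)ᶜ, ∑ y ∈ (S.erase u)ᶜ, numGeodesics G x y :=
    Finset.sum_congr rfl fun x hx => Finset.sum_congr rfl fun y hy =>
      move_numGeo_far hG h hw hx hy
  have h4 : rho (move G S u w) (S.erase u)ᶜ w = rho G (S.erase u)ᶜ w :=
    Finset.sum_congr rfl fun y hy => move_numGeo_far hG h hw hwA hy
  rw [h1, h2, h3, h4]
  ring

end Move

/-! ### Maximal cacti -/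

/-- `G` has the largest value of `T` among the cacti on `V` with the same number of cycles. -/
structure IsMax (G : SimpleGraph V) : Prop where
  cactus : IsCactus G
  le : ∀ G' : SimpleGraph V, IsCactus G' → (cycleEdgeSets G').ncard = (cycleEdgeSets G).ncard →
    T G' ≤ T G

lemma IsMax.of_T_eq {G G' : SimpleGraph V} (h : IsMax G) (hG' : IsCactus G')
    (hn : (cycleEdgeSets G').ncard = (cycleEdgeSets G).ncard) (hT : T G ≤ T G') : IsMax G' :=
  ⟨hG', fun G'' hc hn' => (h.le G'' hc (hn'.trans hn)).trans hT⟩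

section Max

variable {G : SimpleGraph V} {S : Finset V} {u w : V}

lemma sigma_pos (hG : G.Connected) (hS : ∃ x ∈ S, x ≠ u) :
    0 < ∑ x ∈ S.erase u, numGeodesics G x u := by
  obtain ⟨x, hx, hxu⟩ := hS
  exact Finset.sum_pos (fun x _ => numGeo_pos hG x u) ⟨x, Finset.mem_erase.2 ⟨hxu, hx⟩⟩

/-- In a maximal cactus, no other vertex is a better place for the branches `S` than `u`. -/
lemma IsMax.rho_le (hm : IsMax G) (h : IsCut G u S) (hS : ∃ x ∈ S, x ≠ u) (hw : w ∉ S) :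
    rho G (S.erase u)ᶜ w ≤ rho G (S.erase u)ᶜ u := by
  have h1 := hm.le _ (move_cactus hm.cactus h hw) (move_ncard h hw)
  have h2 := T_move hm.cactus.1 h hw
  have h3 := sigma_pos hm.cactus.1 hS
  by_contra! hlt
  have := Nat.mul_lt_mul_of_pos_left hlt h3
  omega

lemma IsMax.move (hm : IsMax G) (h : IsCut G u S) (hw : w ∉ S)
    (he : rho G (S.erase u)ᶜ u ≤ rho G (S.erase u)ᶜ w) : IsMax (move G S u w) := by
  refine hm.of_T_eq (move_cactus hm.cactus h hw) (move_ncard h hw) ?_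
  have h2 := T_move hm.cactus.1 h hw
  have := Nat.mul_le_mul_left (∑ x ∈ S.erase u, numGeodesics G x u) he
  omega

end Max

/-! ### Branches of a maximal cactus -/

section Max

variable {G : SimpleGraph V} {u : V}

lemma IsCut.union {S S' : Finset V} (h : IsCut G u S) (h' : IsCut G u S') :
    IsCut G u (S ∪ S') := by
  refine ⟨Finset.mem_union_left _ h.mem, fun x hx y hy hxy => ?_⟩
  rw [Finset.mem_union, not_or] at hy
  rcases Finset.mem_union.1 hx with hx | hx
  · exact h.adj x hx y hy.1 hxy
  · exact h'.adj x hx y hy.2 hxy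

/-- Moving the third family of branches to `c₁` does not increase the count. -/
lemma three_branches_aux (hm : IsMax G) {S₁ S₂ : Finset V} (h₁ : IsCut G u S₁)
    (h₂ : IsCut G u S₂) (hd : ∀ x ∈ S₁, x ∈ S₂ → x = u) {c₁ : V} (hc₁ : c₁ ∈ S₁)
    (hg₁ : 2 ≤ numGeodesics G c₁ u) {y : V} (hy₁ : y ∉ S₁) (hy₂ : y ∉ S₂) :
    3 + ∑ z ∈ S₂.erase u, numGeodesics G u z ≤ 1 + ∑ z ∈ S₁.erase u, numGeodesics G u z := by
  have hG := hm.cactus.1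
  have hcu : c₁ ≠ u := by rintro rfl; rw [numGeo_self] at hg₁; omega
  have hS₃ := (h₁.union h₂).compl
  have hA : ((((S₁ ∪ S₂).erase u)ᶜ).erase u)ᶜ = S₁ ∪ S₂ := by
    ext x
    have := (h₁.union h₂).mem
    simp only [Finset.mem_compl, Finset.mem_erase]
    by_cases hx : x = u
    · subst hx; tauto
    · tauto
  have hle := hm.rho_le hS₃ (w := c₁) ⟨y, by simp [hy₁, hy₂], fun h => hy₁ (h ▸ h₁.mem)⟩
    (by simp [hcu, hc₁])
  have hU : S₁ ∪ S₂ = S₁ ∪ S₂.erase u := by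
    ext x
    simp only [Finset.mem_union, Finset.mem_erase]
    by_cases hx : x = u
    · subst hx; simp [h₁.mem]
    · simp [hx]
  have hdis : Disjoint S₁ (S₂.erase u) := by
    rw [Finset.disjoint_left]
    exact fun x hx hx' => (Finset.mem_erase.1 hx').1 (hd x hx (Finset.mem_erase.1 hx').2)
  rw [hA, hU, rho, rho, Finset.sum_union hdis, Finset.sum_union hdis] at hle
  have e1 : ∑ z ∈ S₂.erase u, numGeodesics G c₁ z =
      numGeodesics G c₁ u * ∑ z ∈ S₂.erase u, numGeodesics G u z := by
    rw [Finset.mul_sum]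
    refine Finset.sum_congr rfl fun z hz => h₁.numGeo hG hc₁ fun hz1 => ?_
    exact hd z hz1 (Finset.mem_erase.1 hz).2
  have e2 : ∑ z ∈ S₁, numGeodesics G u z = 1 + ∑ z ∈ S₁.erase u, numGeodesics G u z := by
    rw [← Finset.add_sum_erase _ _ h₁.mem, numGeo_self]
  have e3 : 3 ≤ ∑ z ∈ S₁, numGeodesics G c₁ z := by
    have hsub : ({c₁, u} : Finset V) ⊆ S₁ := by
      intro z hz
      simp only [Finset.mem_insert, Finset.mem_singleton] at hz
      rcases hz with rfl | rfl
      exacts [hc₁, h₁.mem]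
    refine le_trans ?_ (Finset.sum_le_sum_of_subset hsub)
    rw [Finset.sum_pair hcu, numGeo_self]
    omega
  have e4 := Nat.mul_le_mul_right (∑ z ∈ S₂.erase u, numGeodesics G u z) hg₁
  rw [e1, e2] at hle
  omega

/-- In a maximal cactus, two disjoint families of branches at `u`, each containing a vertex
with at least two geodesics to `u`, already contain all the branches at `u`. -/
lemma IsMax.no_third (hm : IsMax G) {S₁ S₂ : Finset V} (h₁ : IsCut G u S₁)
    (h₂ : IsCut G u S₂) (hd : ∀ x ∈ S₁, x ∈ S₂ → x = u) {c₁ c₂ : V} (hc₁ : c₁ ∈ S₁)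
    (hg₁ : 2 ≤ numGeodesics G c₁ u) (hc₂ : c₂ ∈ S₂) (hg₂ : 2 ≤ numGeodesics G c₂ u) (y : V) :
    y ∈ S₁ ∨ y ∈ S₂ := by
  by_contra! hy
  have a := three_branches_aux hm h₁ h₂ hd hc₁ hg₁ hy.1 hy.2
  have b := three_branches_aux hm h₂ h₁ (fun x h h' => hd x h' h) hc₂ hg₂ hy.2 hy.1
  omega

/-- Splits the weights seen from `u` and `v` according to the branch at `v`; the last clause is
maximality applied to moving the branch at `u` to `v`. -/
lemma swap_aux (hm : IsMax G) {v : V} {S S' : Finset V} (h : IsCut G u S) (h' : IsCut G v S')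
    (hd : Disjoint S S') (hS : ∃ x ∈ S, x ≠ u) (hg : numGeodesics G u v = 1) :
    rho G (S.erase u)ᶜ u = rho G ((S.erase u)ᶜ \ S'.erase v) u + ∑ z ∈ S'.erase v, numGeodesics G v z
    ∧ rho G (S.erase u)ᶜ v =
      rho G ((S.erase u)ᶜ \ S'.erase v) v + ∑ z ∈ S'.erase v, numGeodesics G v z
    ∧ rho G ((S.erase u)ᶜ \ S'.erase v) v ≤ rho G ((S.erase u)ᶜ \ S'.erase v) u := by
  have hG := hm.cactus.1
  rw [Finset.disjoint_left] at hd
  have hsub : S'.erase v ⊆ (S.erase u)ᶜ := by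
    intro x hx
    simp only [Finset.mem_compl, Finset.mem_erase, not_and]
    exact fun _ hxS => hd hxS (Finset.mem_erase.1 hx).2
  have e : ∑ z ∈ S'.erase v, numGeodesics G u z = ∑ z ∈ S'.erase v, numGeodesics G v z := by
    refine Finset.sum_congr rfl fun z hz => ?_
    have := h'.numGeo hG (Finset.mem_erase.1 hz).2 (t := u) (fun hu => absurd hu (hd h.mem))
    rw [numGeodesics_comm G v u, hg, mul_one] at this
    rw [numGeodesics_comm, this, numGeodesics_comm]
  have e1 : rho G (S.erase u)ᶜ u =
      rho G ((S.erase u)ᶜ \ S'.erase v) u + ∑ z ∈ S'.erase v, numGeodesics G v z := by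
    rw [rho, rho, ← e, Finset.sum_sdiff hsub]
  have e2 : rho G (S.erase u)ᶜ v =
      rho G ((S.erase u)ᶜ \ S'.erase v) v + ∑ z ∈ S'.erase v, numGeodesics G v z := by
    rw [rho, rho, Finset.sum_sdiff hsub]
  have := hm.rho_le h hS (fun hv => hd hv h'.mem)
  exact ⟨e1, e2, by omega⟩

/-- If disjoint families of branches hang at `u` and at `v`, and `u`, `v` are joined by a
single geodesic, then in a maximal cactus those at `u` can be moved to `v` at no cost. -/
lemma IsMax.slide (hm : IsMax G) {v : V} {S S' : Finset V} (h : IsCut G u S)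
    (h' : IsCut G v S') (hd : Disjoint S S') (hS : ∃ x ∈ S, x ≠ u) (hS' : ∃ x ∈ S', x ≠ v)
    (hg : numGeodesics G u v = 1) : IsMax (Cactus.move G S u v) := by
  obtain ⟨a1, a2, -⟩ := swap_aux hm h h' hd hS hg
  obtain ⟨-, -, b3⟩ := swap_aux hm h' h hd.symm hS' (by rwa [numGeodesics_comm])
  have hM : (S'.erase v)ᶜ \ S.erase u = (S.erase u)ᶜ \ S'.erase v := by
    ext x; simp only [Finset.mem_sdiff, Finset.mem_compl]; tauto
  rw [hM] at b3
  exact hm.move h (fun hv => Finset.disjoint_left.1 hd hv h'.mem) (by omega)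

end Max

/-! ### The branches at the vertices of a cycle -/

section Cls

variable {G : SimpleGraph V}

lemma reach_del {E : Set (Sym2 V)} {x y : V} :
    (G.deleteEdges E).Reachable x y ↔ ∃ p : G.Walk x y, ∀ e ∈ p.edges, e ∉ E := by
  constructor
  · rintro ⟨p⟩
    refine ⟨p.mapLe (deleteEdges_le _), fun e he => ?_⟩
    rw [Walk.edges_mapLe_eq_edges] at he
    have := p.edges_subset_edgeSet he
    rw [edgeSet_deleteEdges] at this
    exact this.2
  · rintro ⟨p, hp⟩
    exact ⟨p.toDeleteEdges E hp⟩

/-- An edge together with a walk between its endpoints that avoids it contains a cycle through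
the edge. -/
lemma cycle_of_walk {x y : V} (h : G.Adj x y) (q : G.Walk y x) (hq : s(x, y) ∉ q.edges) :
    ∃ (u : V) (d : G.Walk u u), d.IsCycle ∧ s(x, y) ∈ d.edges ∧
      ∀ e ∈ d.edges, e = s(x, y) ∨ e ∈ q.edges := by
  refine ⟨x, Walk.cons h q.bypass, (Walk.cons_isCycle_iff _ _).2
    ⟨q.bypass_isPath, fun hh => hq (q.edges_bypass_subset_edges hh)⟩, by simp, fun e he => ?_⟩
  rw [Walk.edges_cons, List.mem_cons] at he
  exact he.imp_right fun hh => q.edges_bypass_subset_edges hh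

/-- Two cycles of a cactus with a common edge have the same edges. -/
lemma edges_eq (hG : IsCactus G) {u v : V} {c : G.Walk u u} {d : G.Walk v v}
    (hc : c.IsCycle) (hd : d.IsCycle) {e : Sym2 V} (h1 : e ∈ c.edges) (h2 : e ∈ d.edges) (f : Sym2 V) :
    f ∈ c.edges ↔ f ∈ d.edges := by
  have : {e | e ∈ c.edges} = {e | e ∈ d.edges} := by
    by_contra hne
    exact Set.disjoint_left.1 (hG.2 ⟨u, c, hc, rfl⟩ ⟨v, d, hd, rfl⟩ hne) h1 h2
  exact Set.ext_iff.1 this f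

lemma mem_edges_iff {u v x y : V} (p : G.Walk u v) :
    s(x, y) ∈ p.edges ↔ ∃ k < p.length, s(x, y) = s(p.getVert k, p.getVert (k + 1)) := by
  induction p with
  | nil => simp
  | cons h q ih =>
    rw [Walk.edges_cons, List.mem_cons, ih]
    constructor
    · rintro (h | ⟨k, hk, h⟩)
      · exact ⟨0, by simp, by simpa using h⟩
      · exact ⟨k + 1, by simpa using hk, by simpa using h⟩
    · rintro ⟨k, hk, h⟩
      cases k with
      | zero => left; simpa using h
      | succ k => exact Or.inr ⟨k, by simpa using hk, by simpa using h⟩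

lemma mem_edges_rotate {u v : V} {c : G.Walk u u} (hv : v ∈ c.support) (e : Sym2 V) :
    e ∈ (c.rotate v hv).edges ↔ e ∈ c.edges := (c.rotate_edges v hv).mem_iff

/-- Distinct vertices of a cycle of a cactus are not joined off the edges of the cycle. -/
lemma not_reach (hG : IsCactus G) {u : V} {c : G.Walk u u} (hc : c.IsCycle) {v w : V}
    (hv : v ∈ c.support) (hw : w ∈ c.support) (hvw : v ≠ w) :
    ¬ (G.deleteEdges {e | e ∈ c.edges}).Reachable v w := by
  intro hr
  obtain ⟨p, hp⟩ := reach_del.1 hr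
  set d := c.rotate v hv with hd
  have hdc : d.IsCycle := hc.rotate hv
  have hpd : ∀ e ∈ p.edges, e ∉ d.edges := fun e he h => hp e he ((mem_edges_rotate hv e).1 h)
  have hwd : w ∈ d.support := by rwa [hd, Walk.mem_support_rotate_iff]
  have hspec := d.take_spec hwd
  have hnd : ((d.takeUntil w hwd).edges ++ (d.dropUntil w hwd).edges).Nodup := by
    rw [← Walk.edges_append, hspec]; exact hdc.isTrail.edges_nodup
  have hmem : ∀ e, e ∈ (d.takeUntil w hwd).edges ∨ e ∈ (d.dropUntil w hwd).edges → e ∈ d.edges := by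
    intro e he
    rw [← hspec, Walk.edges_append]; exact List.mem_append.2 he
  generalize d.takeUntil w hwd = q₁ at *
  generalize d.dropUntil w hwd = q₂ at *
  cases q₁ with
  | nil => exact hvw rfl
  | @cons _ n _ hadj r =>
    cases q₂ with
    | nil => exact hvw rfl
    | @cons _ m _ hadj' r' =>
      rw [Walk.edges_cons, Walk.edges_cons] at hnd
      obtain ⟨z, d', hd', h1, h2⟩ := cycle_of_walk hadj (r.append p.reverse) (by
        rw [Walk.edges_append, Walk.edges_reverse, List.mem_append, List.mem_reverse]
        rintro (h | h)
        · simp only [List.cons_append, List.nodup_cons, List.mem_append] at hnd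
          exact hnd.1 (Or.inl h)
        · exact hpd _ h (hmem _ (Or.inl (by simp))))
      have h3 := (edges_eq hG hdc hd' (hmem _ (Or.inl (by simp))) h1 s(w, m)).1
        (hmem _ (Or.inr (by simp)))
      rcases h2 _ h3 with h | h
      · simp only [h, List.cons_append, List.nodup_cons, List.mem_append] at hnd
        exact hnd.1 (Or.inr (List.mem_cons_self ..))
      · rw [Walk.edges_append, Walk.edges_reverse, List.mem_append, List.mem_reverse] at h
        rcases h with h | h
        · have := List.disjoint_of_nodup_append hnd
          exact this (List.mem_cons_of_mem _ h) (List.mem_cons_self ..)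
        · exact hpd _ h (hmem _ (Or.inr (by simp)))

open Classical in
/-- The vertices which can be reached from `v` without using edges of the closed walk `c`. -/
noncomputable def cls {u : V} (c : G.Walk u u) (v : V) : Finset V :=
  Finset.univ.filter fun x => (G.deleteEdges {e | e ∈ c.edges}).Reachable v x

lemma mem_cls {u : V} {c : G.Walk u u} {v x : V} :
    x ∈ cls c v ↔ (G.deleteEdges {e | e ∈ c.edges}).Reachable v x := by
  simp [cls]

lemma self_mem_cls {u : V} (c : G.Walk u u) (v : V) : v ∈ cls c v := mem_cls.2 (Reachable.refl _)

lemma cls_congr {u u' : V} {c : G.Walk u u} {c' : G.Walk u' u'}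
    (h : ∀ e, e ∈ c.edges ↔ e ∈ c'.edges) (v : V) : cls c v = cls c' v := by
  have : {e | e ∈ c.edges} = {e | e ∈ c'.edges} := Set.ext h
  ext x
  rw [mem_cls, mem_cls, this]

lemma cls_rotate {u v : V} {c : G.Walk u u} (hv : v ∈ c.support) (w : V) :
    cls (c.rotate v hv) w = cls c w := cls_congr (mem_edges_rotate hv) w

variable {u : V} {c : G.Walk u u}

lemma cls_step {v x y : V} (hx : x ∈ cls c v) (hxy : G.Adj x y) (he : s(x, y) ∉ c.edges) :
    y ∈ cls c v := by
  rw [mem_cls] at *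
  exact hx.trans (Adj.reachable (deleteEdges_adj.2 ⟨hxy, he⟩))

lemma cls_inj (hG : IsCactus G) (hc : c.IsCycle) {v w x : V} (hv : v ∈ c.support)
    (hw : w ∈ c.support) (h1 : x ∈ cls c v) (h2 : x ∈ cls c w) : v = w := by
  rw [mem_cls] at *
  by_contra h
  exact not_reach hG hc hv hw h (h1.trans h2.symm)

lemma cls_support (hG : IsCactus G) (hc : c.IsCycle) {v x : V} (hv : v ∈ c.support)
    (hx : x ∈ c.support) (h1 : x ∈ cls c v) : x = v :=
  (cls_inj hG hc hv hx h1 (self_mem_cls c x)).symm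

lemma cls_cut (hG : IsCactus G) (hc : c.IsCycle) {v : V} (hv : v ∈ c.support) :
    IsCut G v (cls c v) := by
  refine ⟨self_mem_cls c v, fun x hx y hy hxy => ?_⟩
  have he : s(x, y) ∈ c.edges := by
    by_contra he
    exact hy (cls_step hx hxy he)
  exact cls_support hG hc hv (c.fst_mem_support_of_mem_edges he) hx

lemma cls_cover (hG : G.Connected) (c : G.Walk u u) (x : V) : ∃ v ∈ c.support, x ∈ cls c v := by
  obtain ⟨p⟩ := hG u x
  suffices H : ∀ (a b : V) (q : G.Walk a b), (∃ v ∈ c.support, a ∈ cls c v) →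
      ∃ v ∈ c.support, b ∈ cls c v from
    H u x p ⟨u, c.start_mem_support, self_mem_cls c u⟩
  intro a b q
  induction q with
  | nil => exact id
  | @cons a y b hadj q ih =>
    rintro ⟨v, hv, ha⟩
    apply ih
    by_cases he : s(a, y) ∈ c.edges
    · exact ⟨y, c.snd_mem_support_of_mem_edges he, self_mem_cls c y⟩
    · exact ⟨v, hv, cls_step ha hadj he⟩

/-! ### Geodesics along a cycle -/

lemma getVert_eq (hc : c.IsCycle) {i j : ℕ} (hi : i ≤ c.length) (hj : j ≤ c.length)
    (h : c.getVert i = c.getVert j) : i = j ∨ (i = 0 ∧ j = c.length) ∨ (i = c.length ∧ j = 0) := by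
  rcases Nat.eq_zero_or_pos i with rfl | hi0
  · rcases Nat.eq_zero_or_pos j with rfl | hj0
    · exact Or.inl rfl
    · rw [Walk.getVert_zero] at h
      have := (hc.getVert_endpoint_iff hj).1 h.symm
      omega
  · rcases Nat.eq_zero_or_pos j with rfl | hj0
    · rw [Walk.getVert_zero] at h
      have := (hc.getVert_endpoint_iff hi).1 h
      omega
    · exact Or.inl (hc.getVert_injOn ⟨hi0, hi⟩ ⟨hj0, hj⟩ h)

lemma getVert_edge (hc : c.IsCycle) {i : ℕ} (hi : i ≤ c.length) {y : V}
    (h : s(c.getVert i, y) ∈ c.edges) : ∃ j ≤ c.length, y = c.getVert j ∧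
      (j + 1 = i ∨ j = i + 1 ∨ (i = 0 ∧ j + 1 = c.length) ∨ (i = c.length ∧ j = 1)) := by
  obtain ⟨k, hk, h⟩ := (mem_edges_iff c).1 h
  rw [Sym2.eq_iff] at h
  rcases h with ⟨h1, h2⟩ | ⟨h1, h2⟩
  · exact ⟨k + 1, hk, h2, by have := getVert_eq hc hi hk.le h1; omega⟩
  · exact ⟨k, hk.le, h2, by have := getVert_eq hc hi hk h1; omega⟩

/-- A walk from the branch at the `i`-th vertex of the cycle to the start of the cycle is at least
as long as the shorter of the two arcs. -/
lemma cycle_dist_lower (hG : IsCactus G) (hc : c.IsCycle) {x y : V} (p : G.Walk x y) :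
    y = u → ∀ i ≤ c.length, x ∈ cls c (c.getVert i) → min i (c.length - i) ≤ p.length := by
  induction p with
  | nil =>
    rintro rfl i hi hx
    have h := cls_support hG hc (c.getVert_mem_support i) c.start_mem_support hx
    have := (hc.getVert_endpoint_iff hi).1 h.symm
    omega
  | @cons x y z hadj q ih =>
    intro hz i hi hx
    rw [Walk.length_cons]
    by_cases he : s(x, y) ∈ c.edges
    · have h := cls_support hG hc (c.getVert_mem_support i) (c.fst_mem_support_of_mem_edges he) hx
      subst h
      obtain ⟨j, hj, rfl, hij⟩ := getVert_edge hc hi he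
      have := ih hz j hj (self_mem_cls c _)
      omega
    · have := ih hz i hi (cls_step hx hadj he)
      omega

lemma cycle_dist (hG : IsCactus G) (hc : c.IsCycle) {i : ℕ} (hi : i ≤ c.length) :
    G.dist (c.getVert i) u = min i (c.length - i) := by
  apply le_antisymm
  · have h1 := G.dist_le (c.take i)
    have h2 := G.dist_le (c.drop i)
    rw [Walk.take_length] at h1
    rw [Walk.drop_length] at h2
    rw [G.dist_comm] at h1
    omega
  · obtain ⟨p, hp⟩ := hG.1.exists_walk_length_eq_dist (c.getVert i) u
    rw [← hp]
    exact cycle_dist_lower hG hc p rfl i hi (self_mem_cls c _)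

/-- Only the vertex opposite the start of an even cycle can have two geodesics to the start. -/
lemma cycle_numGeo (hG : IsCactus G) (hc : c.IsCycle) {i : ℕ} (hi : i ≤ c.length) :
    numGeodesics G (c.getVert i) u ≤ if 2 * i = c.length then 2 else 1 := by
  induction hn : min i (c.length - i) using Nat.strong_induction_on generalizing i with
  | _ n ih =>
    by_cases hu : c.getVert i = u
    · rw [hu, numGeo_self]; split_ifs <;> omega
    have hi0 : i ≠ 0 ∧ i ≠ c.length := by
      rw [hc.getVert_endpoint_iff hi] at hu; omega
    have hsub : ∀ y ∈ desc G (c.getVert i) u, ∃ j ≤ c.length, y = c.getVert j ∧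
        (j + 1 = i ∨ j = i + 1) ∧ min j (c.length - j) + 1 = min i (c.length - i) := by
      intro y hy
      obtain ⟨hadj, hd⟩ := mem_desc.1 hy
      have he : s(c.getVert i, y) ∈ c.edges := by
        by_contra he
        have hcut := cls_cut hG hc (c.getVert_mem_support i)
        have hyc := cls_step (self_mem_cls c (c.getVert i)) hadj he
        have := hcut.dist hG.1 hyc (t := u)
          (fun h => cls_support hG hc (c.getVert_mem_support i) c.start_mem_support h)
        omega
      obtain ⟨j, hj, rfl, hij⟩ := getVert_edge hc hi he
      rw [cycle_dist hG hc hi, cycle_dist hG hc hj] at hd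
      exact ⟨j, hj, rfl, by omega, hd⟩
    rw [numGeo_rec hG.1 hu]
    have hbound : ∀ y ∈ desc G (c.getVert i) u, numGeodesics G y u ≤ 1 := by
      intro y hy
      obtain ⟨j, hj, rfl, hij, hm⟩ := hsub y hy
      have := ih _ (by omega) hj rfl
      rwa [if_neg (by omega)] at this
    have hcard := Finset.sum_le_card_nsmul _ _ _ hbound
    refine hcard.trans ?_
    rw [smul_eq_mul, mul_one]
    rcases lt_trichotomy (2 * i) c.length with h | h | h
    · rw [if_neg (by omega)]
      refine (Finset.card_le_card (t := {c.getVert (i - 1)}) fun y hy => ?_).trans (by simp)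
      obtain ⟨j, hj, rfl, hij, hm⟩ := hsub y hy
      rw [Finset.mem_singleton]; congr 1; omega
    · rw [if_pos h]
      refine (Finset.card_le_card (t := {c.getVert (i - 1), c.getVert (i + 1)})
        fun y hy => ?_).trans Finset.card_le_two
      obtain ⟨j, hj, rfl, hij, hm⟩ := hsub y hy
      rw [Finset.mem_insert, Finset.mem_singleton]
      rcases hij with rfl | rfl <;> simp
    · rw [if_neg (by omega)]
      refine (Finset.card_le_card (t := {c.getVert (i + 1)}) fun y hy => ?_).trans (by simp)
      obtain ⟨j, hj, rfl, hij, hm⟩ := hsub y hy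
      rw [Finset.mem_singleton]; congr 1; omega

/-- Two vertices of a cycle are joined by at most two geodesics. -/
lemma numGeo_le_two (hG : IsCactus G) (hc : c.IsCycle) {v w : V} (hv : v ∈ c.support)
    (hw : w ∈ c.support) : numGeodesics G w v ≤ 2 := by
  rw [← Walk.mem_support_rotate_iff (c := c) (h := hv), Walk.mem_support_iff_exists_getVert] at hw
  obtain ⟨i, rfl, hi⟩ := hw
  refine (cycle_numGeo hG (hc.rotate hv) hi).trans ?_
  split_ifs <;> omega

/-- For each vertex of a cycle there is at most one other vertex of the cycle joined to it by
more than one geodesic. -/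
lemma opposite_unique (hG : IsCactus G) (hc : c.IsCycle) {v w w' : V} (hv : v ∈ c.support)
    (hw : w ∈ c.support) (hw' : w' ∈ c.support) (h : 2 ≤ numGeodesics G w v)
    (h' : 2 ≤ numGeodesics G w' v) : w = w' := by
  rw [← Walk.mem_support_rotate_iff (c := c) (h := hv), Walk.mem_support_iff_exists_getVert]
    at hw hw'
  obtain ⟨i, rfl, hi⟩ := hw
  obtain ⟨j, rfl, hj⟩ := hw'
  have h1 := h.trans (cycle_numGeo hG (hc.rotate hv) hi)
  have h2 := h'.trans (cycle_numGeo hG (hc.rotate hv) hj)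
  split_ifs at h1 h2 <;> first | omega | (congr 1; omega)

end Cls

/-! ### Replacing a long cycle -/

lemma cycle_two_nbrs {G : SimpleGraph V} {u : V} {d : G.Walk u u} (hd : d.IsCycle) {v : V}
    (hv : v ∈ d.support) : ∃ a b, a ≠ b ∧ s(v, a) ∈ d.edges ∧ s(v, b) ∈ d.edges := by
  have h := hd.ncard_neighborSet_toSubgraph_eq_two hv
  obtain ⟨a, b, hab, he⟩ := Set.ncard_eq_two.1 h
  have ha : a ∈ d.toSubgraph.neighborSet v := by rw [he]; simp
  have hb : b ∈ d.toSubgraph.neighborSet v := by rw [he]; simp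
  exact ⟨a, b, hab, (Walk.adj_toSubgraph_iff_mem_edges).1 ha,
    (Walk.adj_toSubgraph_iff_mem_edges).1 hb⟩

section Family

/-- A partition of the vertices into families of branches hanging at the vertices of `I`. -/
structure Fam (G : SimpleGraph V) (I : Finset V) (B : V → Finset V) : Prop where
  cut : ∀ v ∈ I, IsCut G v (B v)
  disj : ∀ v ∈ I, ∀ w ∈ I, v ≠ w → Disjoint (B v) (B w)
  cover : ∀ x, ∃ v ∈ I, x ∈ B v

variable {G : SimpleGraph V} {I : Finset V} {B : V → Finset V}

lemma Fam.eq (h : Fam G I B) {v w : V} (hv : v ∈ I) (hw : w ∈ I) (hx : w ∈ B v) : w = v := by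
  by_contra hne
  exact Finset.disjoint_left.1 (h.disj v hv w hw (Ne.symm hne)) hx (h.cut w hw).mem

lemma Fam.cycle (h : Fam G I B) {u : V} {d : G.Walk u u} (hd : d.IsCycle) :
    (∃ v ∈ I, ∀ x ∈ d.support, x ∈ B v) ∨ ∀ x ∈ d.support, x ∈ I := by
  by_contra! hcon
  obtain ⟨h1, x, hx, hxI⟩ := hcon
  obtain ⟨v, hv, hxv⟩ := h.cover x
  have hne : x ≠ v := fun e => hxI (e ▸ hv)
  rcases (h.cut v hv).cycle hd with h2 | h2
  · obtain ⟨y, hy, hyv⟩ := h1 v hv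
    exact hyv (h2 y hy)
  · have := h2 x hx
    simp [hne, hxv] at this

lemma Fam.numGeo (hG : G.Connected) (h : Fam G I B) {v w x y : V} (hv : v ∈ I) (hw : w ∈ I)
    (hvw : v ≠ w) (hx : x ∈ B v) (hy : y ∈ B w) :
    numGeodesics G x y = numGeodesics G v x * numGeodesics G v w * numGeodesics G w y := by
  have hd := Finset.disjoint_left.1 (h.disj v hv w hw hvw)
  rw [(h.cut v hv).numGeo hG hx (fun hyv => absurd hy (hd hyv)), numGeodesics_comm G v y,
    (h.cut w hw).numGeo hG hy (fun hvB => absurd hvB (hd (h.cut v hv).mem)),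
    numGeodesics_comm G y w, numGeodesics_comm G w v, numGeodesics_comm G x v]
  ring

lemma Fam.T (hG : G.Connected) (h : Fam G I B) :
    T G = ∑ v ∈ I, (∑ x ∈ B v, ∑ y ∈ B v, numGeodesics G x y +
      rho G (B v) v * ∑ w ∈ I.erase v, rho G (B w) w * numGeodesics G v w) := by
  have hU : (Finset.univ : Finset V) = I.biUnion B := by
    ext x
    simpa using h.cover x
  have hsum : ∀ f : V → ℕ, ∑ x, f x = ∑ v ∈ I, ∑ x ∈ B v, f x := by
    intro f
    rw [hU, Finset.sum_biUnion]
    exact fun v hv w hw hvw => h.disj v hv w hw hvw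
  rw [Cactus.T, hsum]
  refine Finset.sum_congr rfl fun v hv => ?_
  have : ∀ x ∈ B v, ∑ y, numGeodesics G x y = ∑ y ∈ B v, numGeodesics G x y +
      numGeodesics G v x * ∑ w ∈ I.erase v, rho G (B w) w * numGeodesics G v w := by
    intro x hx
    rw [hsum, ← Finset.add_sum_erase _ _ hv]
    congr 1
    rw [Finset.mul_sum]
    refine Finset.sum_congr rfl fun w hw => ?_
    obtain ⟨hwv, hw⟩ := Finset.mem_erase.1 hw
    rw [rho, Finset.sum_mul, Finset.mul_sum]
    refine Finset.sum_congr rfl fun y hy => ?_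
    rw [h.numGeo hG hv hw hwv.symm hx hy]
    ring
  rw [Finset.sum_congr rfl this, Finset.sum_add_distrib, ← Finset.sum_mul, rho]

/-- Used for the rows of the original cycle: at most one vertex `q`, the opposite one, has weight
two. -/
lemma row_le {I : Finset V} {R g : V → ℕ} {q : V} (hq : q ∈ I) (h : ∀ w ∈ I, g w ≤ 2)
    (h' : ∀ w ∈ I, w ≠ q → g w ≤ 1) : ∑ w ∈ I, R w * g w ≤ ∑ w ∈ I, R w + R q := by
  rw [← Finset.add_sum_erase _ _ hq, ← Finset.add_sum_erase I R hq]
  have h1 : ∑ w ∈ I.erase q, R w * g w ≤ ∑ w ∈ I.erase q, R w := by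
    refine Finset.sum_le_sum fun w hw => ?_
    obtain ⟨h1, h2⟩ := Finset.mem_erase.1 hw
    simpa using Nat.mul_le_mul_left (R w) (h' w h2 h1)
  have h2 := Nat.mul_le_mul_left (R q) (h q hq)
  omega

/-- Used for the rows of the replacement: the vertices of `J` have weight at least two. -/
lemma row_ge {I J : Finset V} {R g : V → ℕ} (hJ : J ⊆ I) (h : ∀ w ∈ I, 1 ≤ g w)
    (h' : ∀ w ∈ J, 2 ≤ g w) : ∑ w ∈ I, R w + ∑ w ∈ J, R w ≤ ∑ w ∈ I, R w * g w := by
  rw [← Finset.sum_sdiff hJ, ← Finset.sum_sdiff (f := fun w => R w * g w) hJ, add_assoc]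
  refine Nat.add_le_add ?_ ?_
  · refine Finset.sum_le_sum fun w hw => ?_
    simpa using Nat.mul_le_mul_left (R w) (h w (Finset.mem_sdiff.1 hw).1)
  · rw [← Finset.sum_add_distrib]
    refine Finset.sum_le_sum fun w hw => ?_
    have := Nat.mul_le_mul_left (R w) (h' w hw)
    omega

end Family

section Replace

variable {G : SimpleGraph V} {u : V} {c : G.Walk u u}

lemma cls_fam (hG : IsCactus G) (hc : c.IsCycle) : Fam G c.support.toFinset (cls c) := by
  refine ⟨fun v hv => cls_cut hG hc (List.mem_toFinset.1 hv), fun v hv w hw hvw => ?_,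
    fun x => ?_⟩
  · rw [Finset.disjoint_left]
    exact fun x h1 h2 =>
      hvw (cls_inj hG hc (List.mem_toFinset.1 hv) (List.mem_toFinset.1 hw) h1 h2)
  · obtain ⟨v, hv, hx⟩ := cls_cover hG.1 c x
    exact ⟨v, List.mem_toFinset.2 hv, hx⟩

lemma card_support (hc : c.IsCycle) : c.support.toFinset.card = c.length := by
  have h : c.support.toFinset = c.support.tail.toFinset := by
    ext x
    rw [List.mem_toFinset, List.mem_toFinset, Walk.mem_support_iff]
    refine or_iff_right_of_imp ?_
    rintro rfl
    exact Walk.end_mem_tail_support hc.not_nil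
  rw [h, List.toFinset_card_of_nodup hc.support_nodup]
  simp

/-- Remove the edges of `c`, and join the vertices of `c` by the square `p x h z` and by edges
from `h` to the remaining vertices of `c`. -/
def repl (c : G.Walk u u) (p x z h : V) : SimpleGraph V where
  Adj a b := (G.Adj a b ∧ s(a, b) ∉ c.edges) ∨ (a ≠ b ∧
    ((a = p ∧ (b = x ∨ b = z)) ∨ (b = p ∧ (a = x ∨ a = z)) ∨
    (a = h ∧ b ∈ c.support ∧ b ≠ p) ∨ (b = h ∧ a ∈ c.support ∧ a ≠ p)))
  symm := ⟨fun a b H => by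
    rw [Sym2.eq_swap, G.adj_comm]
    tauto⟩
  loopless := ⟨fun a H => H.elim (fun H => H.1.ne rfl) (fun H => H.1 rfl)⟩

/-- Four distinct vertices of the closed walk `c`. -/
structure Quad (c : G.Walk u u) (p x z h : V) : Prop where
  memp : p ∈ c.support
  memx : x ∈ c.support
  memz : z ∈ c.support
  memh : h ∈ c.support
  px : p ≠ x
  pz : p ≠ z
  ph : p ≠ h
  xz : x ≠ z
  xh : x ≠ h
  zh : z ≠ h

variable {p x z h : V}

lemma repl_adj_support (hG : IsCactus G) (hc : c.IsCycle) {a b : V}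
    (ha : a ∈ c.support) (hb : b ∈ c.support) : (repl c p x z h).Adj a b ↔ (a ≠ b ∧
    ((a = p ∧ (b = x ∨ b = z)) ∨ (b = p ∧ (a = x ∨ a = z)) ∨
    (a = h ∧ b ≠ p) ∨ (b = h ∧ a ≠ p))) := by
  constructor
  · rintro (H | H)
    · exact absurd (cls_support hG hc ha hb (cls_step (self_mem_cls c a) H.1 H.2)) H.1.ne'
    · tauto
  · intro H
    exact Or.inr (by tauto)

lemma repl_mem (q : Quad c p x z h) {a b : V} (H : a ≠ b ∧
    ((a = p ∧ (b = x ∨ b = z)) ∨ (b = p ∧ (a = x ∨ a = z)) ∨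
    (a = h ∧ b ∈ c.support ∧ b ≠ p) ∨ (b = h ∧ a ∈ c.support ∧ a ≠ p))) :
    a ∈ c.support ∧ b ∈ c.support := by
  obtain ⟨h1, h2, h3, h4, -⟩ := q
  rcases H with ⟨-, ⟨rfl, rfl | rfl⟩ | ⟨rfl, rfl | rfl⟩ | ⟨rfl, H⟩ | ⟨rfl, H⟩⟩ <;> tauto

lemma repl_adj_cls (hG : IsCactus G) (hc : c.IsCycle) (q : Quad c p x z h) {v : V}
    (hv : v ∈ c.support) {a b : V} (ha : a ∈ cls c v) (hb : b ∈ cls c v) :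
    G.Adj a b ↔ (repl c p x z h).Adj a b := by
  have key : a ∈ c.support → b ∈ c.support → a = b := fun h1 h2 =>
    (cls_support hG hc hv h1 ha).trans (cls_support hG hc hv h2 hb).symm
  constructor
  · intro H
    exact Or.inl ⟨H, fun he => H.ne (key (c.fst_mem_support_of_mem_edges he)
      (c.snd_mem_support_of_mem_edges he))⟩
  · rintro (H | H)
    · exact H.1
    · obtain ⟨h1, h2⟩ := repl_mem q H
      exact absurd (key h1 h2) H.1

lemma repl_connected (hG : IsCactus G) (hc : c.IsCycle) (q : Quad c p x z h) :
    (repl c p x z h).Connected := by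
  have h1 : ∀ v ∈ c.support, (repl c p x z h).Reachable v h := by
    have h2 : ∀ v ∈ c.support, v ≠ p → (repl c p x z h).Reachable v h := by
      intro v hv hvp
      by_cases hvh : v = h
      · rw [hvh]
      · exact Adj.reachable ((repl_adj_support hG hc hv q.memh).2 (by tauto))
    intro v hv
    by_cases hvp : v = p
    · subst hvp
      have : (repl c v x z h).Adj v x := (repl_adj_support hG hc q.memp q.memx).2
        ⟨q.px, Or.inl ⟨rfl, Or.inl rfl⟩⟩
      exact this.reachable.trans (h2 x q.memx q.px.symm)
    · exact h2 v hv hvp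
  have hr : ∀ a, (repl c p x z h).Reachable a h := by
    intro a
    obtain ⟨v, hv, ha⟩ := cls_cover hG.1 c a
    exact (reach_of_cut hG.1 id (cls_cut hG hc hv)
      (fun a ha b hb => (repl_adj_cls hG hc q hv ha hb).1) ha (self_mem_cls c v)).trans (h1 v hv)
  have : Nonempty V := ⟨u⟩
  exact ⟨fun a b => (hr a).trans (hr b).symm⟩

lemma repl_fam (hG : IsCactus G) (hc : c.IsCycle) (q : Quad c p x z h) :
    Fam (repl c p x z h) c.support.toFinset (cls c) := by
  have hF := cls_fam hG hc
  refine ⟨fun v hv => ⟨self_mem_cls c v, fun a ha b hb hab => ?_⟩, hF.disj, hF.cover⟩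
  rcases hab with H | H
  · exact absurd (cls_step ha H.1 H.2) hb
  · exact cls_support hG hc (List.mem_toFinset.1 hv) (repl_mem q H).1 ha

lemma repl_numGeo_cls (hG : IsCactus G) (hc : c.IsCycle) (q : Quad c p x z h) {v : V}
    (hv : v ∈ c.support) {a b : V} (ha : a ∈ cls c v) (hb : b ∈ cls c v) :
    numGeodesics (repl c p x z h) a b = numGeodesics G a b :=
  (transport hG.1 (repl_connected hG hc q) (Equiv.refl V) (cls_cut hG hc hv)
    ((repl_fam hG hc q).cut v (List.mem_toFinset.2 hv)) (fun _ => Iff.rfl)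
    (fun _ ha _ hb => repl_adj_cls hG hc q hv ha hb) ha hb).2

lemma repl_xz (hG : IsCactus G) (hc : c.IsCycle) (q : Quad c p x z h) :
    2 ≤ numGeodesics (repl c p x z h) x z := by
  obtain ⟨h1, h2, h3, h4, h5, h6, h7, h8, h9, h10⟩ := id q
  refine two_le_numGeo (repl_connected hG hc q) h8 ?_ (b := p) (d := h) ?_ ?_ ?_ ?_ h7 <;>
    rw [repl_adj_support hG hc ‹_› ‹_›] <;> tauto

lemma repl_ph (hG : IsCactus G) (hc : c.IsCycle) (q : Quad c p x z h) :
    2 ≤ numGeodesics (repl c p x z h) p h := by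
  obtain ⟨h1, h2, h3, h4, h5, h6, h7, h8, h9, h10⟩ := id q
  refine two_le_numGeo (repl_connected hG hc q) h7 ?_ (b := x) (d := z) ?_ ?_ ?_ ?_ h8 <;>
    rw [repl_adj_support hG hc ‹_› ‹_›] <;> tauto

lemma repl_pi (hG : IsCactus G) (hc : c.IsCycle) (q : Quad c p x z h) {i : V}
    (hi : i ∈ c.support) (hip : i ≠ p) (hix : i ≠ x) (hiz : i ≠ z) :
    2 ≤ numGeodesics (repl c p x z h) p i := by
  by_cases hih : i = h
  · rw [hih]; exact repl_ph hG hc q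
  have hconn := repl_connected hG hc q
  have hcut : IsCut (repl c p x z h) h (insert h (cls c i)) := by
    refine ⟨Finset.mem_insert_self _ _, fun a ha b hb hab => ?_⟩
    rw [Finset.mem_insert, not_or] at hb
    rcases Finset.mem_insert.1 ha with ha | ha
    · exact ha
    · rcases hab with H | H
      · exact absurd (cls_step ha H.1 H.2) hb.2
      · have hai := cls_support hG hc hi (repl_mem q H).1 ha
        subst hai
        exact absurd H.2 (by tauto)
  have hph : p ∉ insert h (cls c i) := by
    rw [Finset.mem_insert, not_or]
    exact ⟨q.ph, fun hh => hip (cls_support hG hc hi q.memp hh).symm⟩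
  rw [numGeodesics_comm, hcut.numGeo hconn (x := i) (t := p)
    (Finset.mem_insert_of_mem (self_mem_cls c i)) (fun hh => absurd hh hph)]
  have h1 := numGeo_pos hconn i h
  have h2 := repl_ph hG hc q
  rw [numGeodesics_comm] at h2
  nlinarith

/-- The cycles of a graph with the family of branches of `c` are those inside the branches and
those through vertices of `c` only. -/
lemma fam_cycles {G' : SimpleGraph V} (hF : Fam G' c.support.toFinset (cls c)) :
    cycleEdgeSets G' = (⋃ v ∈ c.support.toFinset, cyc G' (cls c v)) ∪
      cyc G' c.support.toFinset := by
  refine Set.Subset.antisymm ?_ (Set.union_subset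
    (Set.iUnion₂_subset fun _ _ => cyc_subset _ _) (cyc_subset _ _))
  rintro s ⟨v, d, hd, rfl⟩
  rcases hF.cycle hd with ⟨w, hw, h⟩ | h
  · exact Or.inl (Set.mem_iUnion₂.2 ⟨w, hw, v, d, hd, h, rfl⟩)
  · exact Or.inr ⟨v, d, hd, h, rfl⟩

lemma cyc_support (hG : IsCactus G) (hc : c.IsCycle) :
    cyc G c.support.toFinset = {{e | e ∈ c.edges}} := by
  refine Set.Subset.antisymm ?_ ?_
  · rintro s hs
    obtain ⟨e, he⟩ := cyc_nonempty hs
    induction e with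
    | _ a b =>
      obtain ⟨hab, ha, hb⟩ := cyc_mem hs he
      rw [List.mem_toFinset] at ha hb
      obtain ⟨w, d, hd, -, rfl⟩ := hs
      have hec : s(a, b) ∈ c.edges := by
        by_contra hec
        exact hab.ne' (cls_support hG hc ha hb (cls_step (self_mem_cls c a) hab hec))
      exact Set.ext fun f => edges_eq hG hd hc he hec f
  · rintro s rfl
    exact ⟨u, c, hc, fun x hx => List.mem_toFinset.2 hx, rfl⟩

/-- Among the vertices of the old cycle, the replacement has the new square as its only cycle. -/
lemma cyc_repl (hG : IsCactus G) (hc : c.IsCycle) (q : Quad c p x z h) :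
    cyc (repl c p x z h) c.support.toFinset = {{s(p, x), s(x, h), s(h, z), s(z, p)}} := by
  obtain ⟨h1, h2, h3, h4, h5, h6, h7, h8, h9, h10⟩ := id q
  have hadj := fun {a b} => @repl_adj_support _ _ _ _ _ _ p x z h hG hc a b
  refine Set.Subset.antisymm ?_ ?_
  · rintro s ⟨w, d, hd, hdS, rfl⟩
    simp only [List.mem_toFinset] at hdS
    have hed : ∀ {a b}, s(a, b) ∈ d.edges → a ∈ d.support ∧ b ∈ d.support ∧ (a ≠ b ∧
        ((a = p ∧ (b = x ∨ b = z)) ∨ (b = p ∧ (a = x ∨ a = z)) ∨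
        (a = h ∧ b ≠ p) ∨ (b = h ∧ a ≠ p))) := by
      intro a b hab
      have ha := d.fst_mem_support_of_mem_edges hab
      have hb := d.snd_mem_support_of_mem_edges hab
      exact ⟨ha, hb, (hadj (hdS a ha) (hdS b hb)).1 (d.adj_of_mem_edges hab)⟩
    -- every vertex of `d` has two neighbours on `d`, which forces `d` to be the square
    have hfour : ∀ a ∈ d.support, a = p ∨ a = x ∨ a = z ∨ a = h := by
      intro a ha
      obtain ⟨b, b', hbb, hb, hb'⟩ := cycle_two_nbrs hd ha
      have e1 := (hed hb).2.2
      have e2 := (hed hb').2.2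
      by_contra! hne
      exact hbb (by grind)
    have hp : p ∈ d.support → s(p, x) ∈ d.edges ∧ s(p, z) ∈ d.edges := by
      intro ha
      obtain ⟨b, b', hbb, hb, hb'⟩ := cycle_two_nbrs hd ha
      have e1 := (hed hb).2.2
      have e2 := (hed hb').2.2
      grind
    have hx : x ∈ d.support → s(x, p) ∈ d.edges ∧ s(x, h) ∈ d.edges := by
      intro ha
      obtain ⟨b, b', hbb, hb, hb'⟩ := cycle_two_nbrs hd ha
      have e1 := (hed hb).2.2
      have e2 := (hed hb').2.2
      grind
    have hz : z ∈ d.support → s(z, p) ∈ d.edges ∧ s(z, h) ∈ d.edges := by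
      intro ha
      obtain ⟨b, b', hbb, hb, hb'⟩ := cycle_two_nbrs hd ha
      have e1 := (hed hb).2.2
      have e2 := (hed hb').2.2
      grind
    have hh : h ∈ d.support → s(h, x) ∈ d.edges ∨ s(h, z) ∈ d.edges := by
      intro ha
      obtain ⟨b, b', hbb, hb, hb'⟩ := cycle_two_nbrs hd ha
      have e1 := (hed hb).2.2
      have e2 := (hed hb').2.2
      have f1 := hfour b (hed hb).2.1
      have f2 := hfour b' (hed hb').2.1
      grind
    have hpd : p ∈ d.support := by
      rcases hfour w d.start_mem_support with e | e | e | e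
      · exact e ▸ d.start_mem_support
      · exact (hed (hx (e ▸ d.start_mem_support)).1).2.1
      · exact (hed (hz (e ▸ d.start_mem_support)).1).2.1
      · rcases hh (e ▸ d.start_mem_support) with e | e
        · exact (hed (hx (hed e).2.1).1).2.1
        · exact (hed (hz (hed e).2.1).1).2.1
    have hxd := (hed (hp hpd).1).2.1
    have hzd := (hed (hp hpd).2).2.1
    ext e
    induction e with
    | _ a b =>
      simp only [Set.mem_ofPred_eq, Set.mem_insert_iff, Set.mem_singleton_iff]
      constructor
      · intro he
        have e1 := (hed he).2.2
        have f1 := hfour a (hed he).1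
        have f2 := hfour b (hed he).2.1
        grind
      · rintro (e | e | e | e) <;> rw [e]
        · exact (hp hpd).1
        · exact (hx hxd).2
        · rw [Sym2.eq_swap]; exact (hz hzd).2
        · exact (hz hzd).1
  · rintro s rfl
    have a1 : (repl c p x z h).Adj p x := (hadj h1 h2).2 (by tauto)
    have a2 : (repl c p x z h).Adj x h := (hadj h2 h4).2 (by tauto)
    have a3 : (repl c p x z h).Adj h z := (hadj h4 h3).2 (by tauto)
    have a4 : (repl c p x z h).Adj z p := (hadj h3 h1).2 (by tauto)
    refine ⟨p, .cons a1 (.cons a2 (.cons a3 (.cons a4 .nil))), ?_, ?_, ?_⟩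
    · rw [Walk.cons_isCycle_iff]
      simp [Walk.cons_isPath_iff]
      grind
    · simp
      tauto
    · ext e
      simp

end Replace

/-! ### Maximal cacti have no long cycles -/

section Replace

variable {G : SimpleGraph V} {u : V} {c : G.Walk u u} {p x z h : V}

lemma repl_cycles (hG : IsCactus G) (hc : c.IsCycle) (q : Quad c p x z h) :
    cycleEdgeSets (repl c p x z h) = insert {s(p, x), s(x, h), s(h, z), s(z, p)}
      (⋃ v ∈ c.support.toFinset, cyc G (cls c v)) ∧
    cycleEdgeSets G = insert {e | e ∈ c.edges} (⋃ v ∈ c.support.toFinset, cyc G (cls c v)) := by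
  constructor
  · rw [fam_cycles (repl_fam hG hc q), cyc_repl hG hc q, Set.union_singleton]
    congr 1
    refine Set.iUnion₂_congr fun v hv => cyc_congr fun a ha b hb => ?_
    exact repl_adj_cls hG hc q (List.mem_toFinset.1 hv) ha hb
  · rw [fam_cycles (cls_fam hG hc), cyc_support hG hc, Set.union_singleton]

/-- A cycle inside a branch at `c` has no edge joining two vertices of `c`. -/
lemma branch_edge (hG : IsCactus G) (hc : c.IsCycle) {s : Set (Sym2 V)}
    (hs : s ∈ ⋃ v ∈ c.support.toFinset, cyc G (cls c v)) {a b : V} (ha : a ∈ c.support)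
    (hb : b ∈ c.support) : s(a, b) ∉ s := by
  intro he
  obtain ⟨v, hv, hs⟩ := Set.mem_iUnion₂.1 hs
  rw [List.mem_toFinset] at hv
  obtain ⟨h1, h2, h3⟩ := cyc_mem hs he
  exact h1.ne ((cls_support hG hc hv ha h2).trans (cls_support hG hc hv hb h3).symm)

lemma repl_cactus (hG : IsCactus G) (hc : c.IsCycle) (q : Quad c p x z h) :
    IsCactus (repl c p x z h) := by
  obtain ⟨e1, e2⟩ := repl_cycles hG hc q
  refine ⟨repl_connected hG hc q, ?_⟩
  rw [e1]
  refine Set.Pairwise.insert (hG.2.mono (e2 ▸ Set.subset_insert _ _)) fun s hs _ => ?_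
  have hd : Disjoint {s(p, x), s(x, h), s(h, z), s(z, p)} s := by
    rw [Set.disjoint_left]
    simp only [Set.mem_insert_iff, Set.mem_singleton_iff]
    rintro e (rfl | rfl | rfl | rfl)
    · exact branch_edge hG hc hs q.memp q.memx
    · exact branch_edge hG hc hs q.memx q.memh
    · exact branch_edge hG hc hs q.memh q.memz
    · exact branch_edge hG hc hs q.memz q.memp
  exact ⟨hd, hd.symm⟩

lemma repl_ncard (hG : IsCactus G) (hc : c.IsCycle) (q : Quad c p x z h) :
    (cycleEdgeSets (repl c p x z h)).ncard = (cycleEdgeSets G).ncard := by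
  obtain ⟨e1, e2⟩ := repl_cycles hG hc q
  rw [e1, e2, Set.ncard_insert_of_notMem, Set.ncard_insert_of_notMem]
  · intro hs
    cases c with
    | nil => exact hc.not_nil Walk.nil_nil
    | @cons _ b _ hadj r =>
      exact branch_edge hG hc hs (Walk.start_mem_support _)
        (b := b) (by simp) (by simp)
  · intro hs
    exact branch_edge hG hc hs q.memp q.memx (by simp)

/-- The vertex `q` plays the part of the vertex opposite `v`; on an odd cycle there is none and the
fallback `d` is taken. -/
lemma exists_opp (hG : IsCactus G) (hc : c.IsCycle) {v d : V} (hv : v ∈ c.support)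
    (hd : d ∈ c.support) (hdv : d ≠ v) : ∃ q ∈ c.support, q ≠ v ∧
      (∀ w ∈ c.support, w ≠ q → numGeodesics G v w ≤ 1) ∧ (q = d ∨ 2 ≤ numGeodesics G v q) := by
  by_cases H : ∃ q ∈ c.support, 2 ≤ numGeodesics G v q
  · obtain ⟨q, hq, h2⟩ := H
    refine ⟨q, hq, ?_, fun w hw hwq => ?_, Or.inr h2⟩
    · rintro rfl; rw [numGeo_self] at h2; omega
    · by_contra! hlt
      rw [numGeodesics_comm] at h2 hlt
      exact hwq (opposite_unique hG hc hv hw hq hlt h2)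
  · push Not at H
    exact ⟨d, hd, hdv, fun w hw _ => Nat.le_of_lt_succ (H w hw), Or.inl rfl⟩

/-- Choice of the square replacing a long cycle: its corner `p` carries the largest weight, and
the corners `x`, `z` are opposite to no other vertex of `c`. -/
lemma exists_quad (hG : IsCactus G) (hc : c.IsCycle) (h5 : 5 ≤ c.length) (R : V → ℕ) :
    ∃ p x z h, Quad c p x z h ∧ (∀ v ∈ c.support, R v ≤ R p) ∧
      (∀ w ∈ c.support, w ≠ z → numGeodesics G x w ≤ 1) ∧
      (∀ w ∈ c.support, w ≠ x → numGeodesics G z w ≤ 1) ∧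
      (∃ q ∈ c.support, q ≠ p ∧ q ≠ x ∧ q ≠ z ∧
        ∀ w ∈ c.support, w ≠ q → numGeodesics G p w ≤ 1) := by
  have hcard := card_support hc
  obtain ⟨p, hp, hmax⟩ := c.support.toFinset.exists_max_image R ⟨u, by simp⟩
  simp only [List.mem_toFinset] at hp hmax
  have hpick : ∀ s : Finset V, s.card ≤ 4 → ∃ y ∈ c.support, y ∉ s := by
    intro s hs
    obtain ⟨y, hy, hys⟩ := Finset.exists_mem_notMem_of_card_lt_card
      (s := s) (t := c.support.toFinset) (by omega)
    exact ⟨y, List.mem_toFinset.1 hy, hys⟩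
  suffices H : ∃ x ∈ c.support, ∃ z ∈ c.support, x ≠ p ∧ z ≠ p ∧ x ≠ z ∧
      (∀ w ∈ c.support, w ≠ z → numGeodesics G x w ≤ 1) ∧
      (∀ w ∈ c.support, w ≠ x → numGeodesics G z w ≤ 1) by
    obtain ⟨x, hx, z, hz, hxp, hzp, hxz, h1, h2⟩ := H
    obtain ⟨h, hh, hh'⟩ := hpick {p, x, z} (Finset.card_le_three.trans (by norm_num))
    simp only [Finset.mem_insert, Finset.mem_singleton, not_or] at hh'
    refine ⟨p, x, z, h, ⟨hp, hx, hz, hh, hxp.symm, hzp.symm, Ne.symm hh'.1, hxz, Ne.symm hh'.2.1,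
      Ne.symm hh'.2.2⟩, hmax, h1, h2, ?_⟩
    obtain ⟨q, hq, hqp, h3, h4⟩ := exists_opp hG hc hp hh hh'.1
    refine ⟨q, hq, hqp, ?_, ?_, h3⟩
    · rintro rfl
      rcases h4 with rfl | h4
      · exact hh'.2.1 rfl
      · have := h1 p hp hzp.symm
        rw [numGeodesics_comm] at this
        omega
    · rintro rfl
      rcases h4 with rfl | h4
      · exact hh'.2.2 rfl
      · have := h2 p hp hxp.symm
        rw [numGeodesics_comm] at this
        omega
  by_cases H : ∃ x ∈ c.support, ∃ z ∈ c.support, x ≠ p ∧ z ≠ p ∧ 2 ≤ numGeodesics G x z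
  · obtain ⟨x, hx, z, hz, hxp, hzp, h2⟩ := H
    have h2' := h2
    rw [numGeodesics_comm] at h2'
    refine ⟨x, hx, z, hz, hxp, hzp, ?_, ?_, ?_⟩
    · rintro rfl; rw [numGeo_self] at h2; omega
    · intro w hw hwz
      by_contra! hlt
      rw [numGeodesics_comm] at hlt
      exact hwz (opposite_unique hG hc hx hw hz hlt h2')
    · intro w hw hwx
      by_contra! hlt
      rw [numGeodesics_comm] at hlt
      exact hwx (opposite_unique hG hc hz hw hx hlt h2)
  · push Not at H
    obtain ⟨d, hd, hdp⟩ := hpick {p} (by simp)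
    obtain ⟨q, hq, hqp, h3, -⟩ := exists_opp hG hc hp hd (by simpa using hdp)
    obtain ⟨x, hx, hx'⟩ := hpick {p, q} (Finset.card_le_two.trans (by norm_num))
    obtain ⟨z, hz, hz'⟩ := hpick {p, q, x} (Finset.card_le_three.trans (by norm_num))
    simp only [Finset.mem_insert, Finset.mem_singleton, not_or] at hx' hz'
    refine ⟨x, hx, z, hz, hx'.1, hz'.1, Ne.symm hz'.2.2, fun w hw _ => ?_, fun w hw _ => ?_⟩
    · by_cases hwp : w = p
      · subst hwp; rw [numGeodesics_comm]; exact h3 x hx hx'.2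
      · exact Nat.le_of_lt_succ (H x hx w hw hx'.1 hwp)
    · by_cases hwp : w = p
      · subst hwp; rw [numGeodesics_comm]; exact h3 z hz hz'.2.1
      · exact Nat.le_of_lt_succ (H z hz w hw hz'.1 hwp)

/-- A maximal cactus has no cycle of length at least five. -/
lemma IsMax.girth (hm : IsMax G) : IsGirthRestricted G := by
  intro u c hc
  by_contra hL
  have h3 := hc.three_le_length
  have hG := hm.cactus
  set R : V → ℕ := fun v => rho G (cls c v) v with hR
  obtain ⟨p, x, z, h, q, hmax, hx1, hz1, o, ho, hop, hox, hoz, hp1⟩ :=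
    exists_quad hG hc (by omega) R
  set I := c.support.toFinset with hI
  have hle := hm.le _ (repl_cactus hG hc q) (repl_ncard hG hc q)
  have hconn := repl_connected hG hc q
  rw [(cls_fam hG hc).T hG.1, (repl_fam hG hc q).T hconn] at hle
  set G' := repl c p x z h with hG'
  have hRpos : ∀ v, 1 ≤ R v := fun v => by
    have := Finset.single_le_sum (f := fun y => numGeodesics G v y) (fun _ _ => Nat.zero_le _)
      (self_mem_cls c v)
    rw [numGeo_self] at this
    exact this
  have hR' : ∀ v ∈ I, rho G' (cls c v) v = R v := fun v hv =>
    Finset.sum_congr rfl fun y hy =>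
      repl_numGeo_cls hG hc q (List.mem_toFinset.1 hv) (self_mem_cls c v) hy
  have hD' : ∀ v ∈ I, ∑ a ∈ cls c v, ∑ b ∈ cls c v, numGeodesics G' a b =
      ∑ a ∈ cls c v, ∑ b ∈ cls c v, numGeodesics G a b := fun v hv =>
    Finset.sum_congr rfl fun a ha => Finset.sum_congr rfl fun b hb =>
      repl_numGeo_cls hG hc q (List.mem_toFinset.1 hv) ha hb
  have hmI : ∀ {v}, v ∈ c.support → v ∈ I := fun hv => List.mem_toFinset.2 hv
  have hup : ∀ v ∈ I, ∀ o ∈ I, o ≠ v → (∀ w ∈ c.support, w ≠ o → numGeodesics G v w ≤ 1) →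
      ∑ w ∈ I.erase v, R w * numGeodesics G v w ≤ ∑ w ∈ I.erase v, R w + R o := by
    intro v hv o ho hov h1
    refine row_le (Finset.mem_erase.2 ⟨hov, ho⟩) (fun w hw => ?_) (fun w hw hwo => ?_)
    · exact numGeo_le_two hG hc (List.mem_toFinset.1 (Finset.mem_of_mem_erase hw))
        (List.mem_toFinset.1 hv)
    · exact h1 w (List.mem_toFinset.1 (Finset.mem_of_mem_erase hw)) hwo
  have hlow : ∀ v ∈ I, ∀ J ⊆ I.erase v, (∀ w ∈ J, 2 ≤ numGeodesics G' v w) →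
      ∑ w ∈ I.erase v, R w + ∑ w ∈ J, R w ≤ ∑ w ∈ I.erase v, R w * numGeodesics G' v w :=
    fun v hv J hJ h2 => row_ge hJ (fun w _ => numGeo_pos hconn v w) h2
  have hlow1 : ∀ v ∈ I, ∀ o ∈ I, o ≠ v → 2 ≤ numGeodesics G' v o →
      ∑ w ∈ I.erase v, R w + R o ≤ ∑ w ∈ I.erase v, R w * numGeodesics G' v w := by
    intro v hv o ho hov h2
    have := hlow v hv {o} (by simpa using ⟨hov, ho⟩) (by simpa using h2)
    simpa using this
  have hrow : ∀ v ∈ I, v ≠ p → ∑ w ∈ I.erase v, R w * numGeodesics G v w ≤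
      ∑ w ∈ I.erase v, R w * numGeodesics G' v w := by
    intro v hv hvp
    have hxz := repl_xz hG hc q
    by_cases hvx : v = x
    · subst hvx
      exact (hup v hv z (hmI q.memz) q.xz.symm hx1).trans
        (hlow1 v hv z (hmI q.memz) q.xz.symm hxz)
    by_cases hvz : v = z
    · subst hvz
      rw [numGeodesics_comm] at hxz
      exact (hup v hv x (hmI q.memx) q.xz hz1).trans (hlow1 v hv x (hmI q.memx) q.xz hxz)
    have hv' := List.mem_toFinset.1 hv
    obtain ⟨o, ho, hov, h1, -⟩ := exists_opp hG hc hv' q.memp (Ne.symm hvp)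
    have h2 := repl_pi hG hc q hv' hvp hvx hvz
    rw [numGeodesics_comm] at h2
    have h3 := hlow1 v hv p (hmI q.memp) (Ne.symm hvp) h2
    have h4 := hup v hv o (hmI ho) hov h1
    have := hmax o ho
    omega
  have hpI := hmI q.memp
  have hrowp : ∑ w ∈ I.erase p, R w * numGeodesics G p w <
      ∑ w ∈ I.erase p, R w * numGeodesics G' p w := by
    have h1 := hup p hpI o (hmI ho) hop hp1
    have hcard : I.card = c.length := card_support hc
    obtain ⟨y, hy, hys⟩ := Finset.exists_mem_notMem_of_card_lt_card
      (s := {p, x, z, o}) (t := I) (Finset.card_le_four.trans_lt (by omega))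
    simp only [Finset.mem_insert, Finset.mem_singleton, not_or] at hys
    have h2 := hlow p hpI {o, y} (by
        intro w hw
        rw [Finset.mem_insert, Finset.mem_singleton] at hw
        rcases hw with rfl | rfl
        · exact Finset.mem_erase.2 ⟨hop, hmI ho⟩
        · exact Finset.mem_erase.2 ⟨hys.1, hy⟩) (by
        intro w hw
        rw [Finset.mem_insert, Finset.mem_singleton] at hw
        rcases hw with rfl | rfl
        · exact repl_pi hG hc q ho hop hox hoz
        · exact repl_pi hG hc q (List.mem_toFinset.1 hy) hys.1 hys.2.1 hys.2.2.1)
    rw [Finset.sum_pair (Ne.symm hys.2.2.2)] at h2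
    have := hRpos y
    omega
  have hS : ∀ v, ∑ w ∈ I.erase v, rho G' (cls c w) w * numGeodesics G' v w =
      ∑ w ∈ I.erase v, R w * numGeodesics G' v w := fun v =>
    Finset.sum_congr rfl fun w hw => by rw [hR' w (Finset.mem_of_mem_erase hw)]
  refine absurd hle (not_le.2 (Finset.sum_lt_sum (fun v hv => ?_) ⟨p, hpI, ?_⟩))
  · rw [hD' v hv, hR' v hv, hS v]
    refine Nat.add_le_add_left (Nat.mul_le_mul_left _ ?_) _
    by_cases hvp : v = p
    · subst hvp; exact hrowp.le
    · exact hrow v hv hvp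
  · rw [hD' p hpI, hR' p hpI, hS p]
    exact Nat.add_lt_add_left (Nat.mul_lt_mul_of_pos_left hrowp (hRpos p)) _

end Replace

/-! ### Squares of a maximal cactus -/

section Squares

variable {G : SimpleGraph V}

/-- `a`, `b`, `c`, `d` are, in this cyclic order, the vertices of a square of `G`. -/
structure Sq (G : SimpleGraph V) (a b c d : V) : Prop where
  ab : G.Adj a b
  bc : G.Adj b c
  cd : G.Adj c d
  da : G.Adj d a
  ac : a ≠ c
  bd : b ≠ d

lemma Sq.rot {a b c d : V} (s : Sq G a b c d) : Sq G b c d a :=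
  ⟨s.bc, s.cd, s.da, s.ab, s.bd, s.ac.symm⟩

lemma Sq.flip {a b c d : V} (s : Sq G a b c d) : Sq G b a d c :=
  ⟨s.ab.symm, s.da.symm, s.cd.symm, s.bc.symm, s.bd, s.ac⟩

/-- The closed walk around a square. -/
def Sq.walk {a b c d : V} (s : Sq G a b c d) : G.Walk a a :=
  .cons s.ab (.cons s.bc (.cons s.cd (.cons s.da .nil)))

lemma Sq.isCycle {a b c d : V} (s : Sq G a b c d) : s.walk.IsCycle := by
  have h1 := s.ab.ne
  have h2 := s.bc.ne
  have h3 := s.cd.ne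
  have h4 := s.da.ne
  have h5 := s.ac
  have h6 := s.bd
  rw [Sq.walk, Walk.cons_isCycle_iff]
  constructor
  · rw [Walk.isPath_def]
    simp [Walk.support_cons]
    grind
  · simp
    grind

lemma Sq.length {a b c d : V} (s : Sq G a b c d) : s.walk.length = 4 := rfl

lemma Sq.mem_support {a b c d : V} (s : Sq G a b c d) (x : V) :
    x ∈ s.walk.support ↔ x = a ∨ x = b ∨ x = c ∨ x = d := by
  simp [Sq.walk]
  tauto

lemma Sq.mem_edges {a b c d : V} (s : Sq G a b c d) (e : Sym2 V) :
    e ∈ s.walk.edges ↔ e = s(a, b) ∨ e = s(b, c) ∨ e = s(c, d) ∨ e = s(d, a) := by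
  simp [Sq.walk]

/-- Every cycle of length four through `v` is, up to rotation, a square starting at `v`. -/
lemma exists_sq {u v : V} {p : G.Walk u u} (hp : p.IsCycle) (hl : p.length = 4)
    (hv : v ∈ p.support) : ∃ (b c d : V) (s : Sq G v b c d),
      (∀ x, x ∈ p.support ↔ x ∈ s.walk.support) ∧ ∀ e, e ∈ p.edges ↔ e ∈ s.walk.edges := by
  set q := p.rotate v hv with hq
  have hqc : q.IsCycle := hp.rotate hv
  have hql : q.length = 4 := by
    rw [← hl, ← Walk.length_edges, ← Walk.length_edges, (p.rotate_edges v hv).perm.length_eq]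
  have h0 : q.getVert 0 = v := q.getVert_zero
  have h4 : q.getVert 4 = v := by rw [← hql]; exact q.getVert_length
  have ha : ∀ i < 4, G.Adj (q.getVert i) (q.getVert (i + 1)) := fun i hi =>
    q.adj_getVert_succ (by omega)
  have hne : ∀ i j, i < 4 → j < 4 → i ≠ j → q.getVert i ≠ q.getVert j := by
    intro i j hi hj hij h
    have := getVert_eq hqc (i := i) (j := j) (by omega) (by omega) h
    omega
  have s : Sq G v (q.getVert 1) (q.getVert 2) (q.getVert 3) := by
    refine ⟨?_, ha 1 (by norm_num), ha 2 (by norm_num), ?_, ?_, hne 1 3 (by norm_num)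
      (by norm_num) (by norm_num)⟩
    · have := ha 0 (by norm_num); rwa [h0] at this
    · have := ha 3 (by norm_num); rwa [h4] at this
    · have := hne 0 2 (by norm_num) (by norm_num) (by norm_num); rwa [h0] at this
  refine ⟨_, _, _, s, fun x => ?_, fun e => ?_⟩
  · rw [← Walk.mem_support_rotate_iff (c := p) (h := hv), ← hq, s.mem_support,
      Walk.mem_support_iff_exists_getVert]
    constructor
    · rintro ⟨n, rfl, hn⟩
      rw [hql] at hn
      interval_cases n <;> simp [h0, h4]
    · rintro (rfl | rfl | rfl | rfl)
      exacts [⟨0, h0, by omega⟩, ⟨1, rfl, by omega⟩, ⟨2, rfl, by omega⟩, ⟨3, rfl, by omega⟩]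
  · induction e using Sym2.ind with | _ x y =>
    rw [← mem_edges_rotate hv, ← hq, mem_edges_iff, s.mem_edges, hql]
    constructor
    · rintro ⟨k, hk, h⟩
      interval_cases k <;> simp_all
    · rintro (h | h | h | h)
      exacts [⟨0, by omega, by rwa [h0]⟩, ⟨1, by omega, h⟩, ⟨2, by omega, h⟩,
        ⟨3, by omega, by rwa [h4]⟩]

/-- A corner of a square with neighbours `b` and `d` on it has a neighbour off the square. -/
def Ext (G : SimpleGraph V) (a b d : V) : Prop := ∃ y, G.Adj a y ∧ y ≠ b ∧ y ≠ d

lemma Sq.ext_iff {a b c d : V} (s : Sq G a b c d) :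
    Ext G a b d ↔ ∃ x ∈ cls s.walk a, x ≠ a := by
  have h1 := s.ab.ne
  have h2 := s.bc.ne
  have h3 := s.cd.ne
  have h4 := s.da.ne
  have h5 := s.ac
  have h6 := s.bd
  constructor
  · rintro ⟨y, hy, hyb, hyd⟩
    refine ⟨y, cls_step (self_mem_cls _ a) hy ?_, hy.ne'⟩
    rw [s.mem_edges]
    have := hy.ne
    simp only [Sym2.eq_iff]
    grind
  · rintro ⟨x, hx, hxa⟩
    obtain ⟨p⟩ := mem_cls.1 hx
    cases p with
    | nil => exact absurd rfl hxa
    | cons h p =>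
      rw [deleteEdges_adj] at h
      refine ⟨_, h.1, ?_, ?_⟩
      · rintro rfl; exact h.2 (by simp [s.mem_edges])
      · rintro rfl; exact h.2 (by simp [s.mem_edges])

lemma Sq.numGeo (hG : IsCactus G) {a b c d : V} (s : Sq G a b c d) : numGeodesics G a c = 2 := by
  refine le_antisymm (numGeo_le_two hG s.isCycle (by simp [s.mem_support])
    (by simp [s.mem_support])) (two_le_numGeo hG.1 s.ac (fun h => s.ac ?_) s.ab s.bc s.da.symm
    s.cd.symm s.bd)
  refine (cls_support hG s.isCycle (v := a) (x := c) (by simp [s.mem_support])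
    (by simp [s.mem_support]) (cls_step (self_mem_cls _ a) h ?_)).symm
  have h1 := s.ab.ne
  have h2 := s.bc.ne
  have h3 := s.cd.ne
  have h4 := s.da.ne
  have h5 := s.ac
  have h6 := s.bd
  rw [s.mem_edges]
  simp only [Sym2.eq_iff]
  grind

/-- The number of geodesics from a corner into another class of a square. -/
lemma Sq.rho (hG : IsCactus G) {a b c d : V} (s : Sq G a b c d) {x y : V}
    (hx : x ∈ s.walk.support) (hy : y ∈ s.walk.support) :
    Cactus.rho G (cls s.walk y) x =
      numGeodesics G x y * Cactus.rho G (cls s.walk y) y := by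
  unfold Cactus.rho
  rw [Finset.mul_sum]
  refine Finset.sum_congr rfl fun z hz => ?_
  have := (cls_cut hG s.isCycle hy).numGeo hG.1 hz (fun h => cls_support hG s.isCycle hy hx h)
  rw [numGeodesics_comm G x z, this, numGeodesics_comm G z y, numGeodesics_comm G y x, mul_comm]

lemma Sq.rho_far (hG : IsCactus G) {a b c d : V} (s : Sq G a b c d) {x : V}
    (hx : x ∈ s.walk.support) : Cactus.rho G ((cls s.walk a).erase a)ᶜ x =
      numGeodesics G x a + numGeodesics G x b * Cactus.rho G (cls s.walk b) b +
      numGeodesics G x c * Cactus.rho G (cls s.walk c) c +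
      numGeodesics G x d * Cactus.rho G (cls s.walk d) d := by
  have ma : a ∈ s.walk.support := by simp [s.mem_support]
  have mb : b ∈ s.walk.support := by simp [s.mem_support]
  have mc : c ∈ s.walk.support := by simp [s.mem_support]
  have md : d ∈ s.walk.support := by simp [s.mem_support]
  have hdis : ∀ {v w}, v ∈ s.walk.support → w ∈ s.walk.support → v ≠ w →
      Disjoint (cls s.walk v) (cls s.walk w) := fun hv hw hvw =>
    Finset.disjoint_left.2 fun z h1 h2 => hvw (cls_inj hG s.isCycle hv hw h1 h2)
  have hF : ((cls s.walk a).erase a)ᶜ =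
      insert a (cls s.walk b ∪ cls s.walk c ∪ cls s.walk d) := by
    ext z
    simp only [Finset.mem_compl, Finset.mem_erase, Finset.mem_insert, Finset.mem_union]
    by_cases hza : z = a
    · simp [hza]
    · simp only [hza, not_false_eq_true, ne_eq, true_and, false_or]
      constructor
      · intro h
        obtain ⟨v, hv, hz⟩ := cls_cover hG.1 s.walk z
        rcases (s.mem_support v).1 hv with rfl | rfl | rfl | rfl
        · exact absurd hz h
        · exact Or.inl (Or.inl hz)
        · exact Or.inl (Or.inr hz)
        · exact Or.inr hz
      · rintro ((h | h) | h) h'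
        · exact s.ab.ne (cls_inj hG s.isCycle ma mb h' h)
        · exact s.ac (cls_inj hG s.isCycle ma mc h' h)
        · exact s.da.ne (cls_inj hG s.isCycle md ma h h')
  have hna : a ∉ cls s.walk b ∪ cls s.walk c ∪ cls s.walk d := by
    simp only [Finset.mem_union, not_or]
    exact ⟨⟨fun h => s.ab.ne (cls_support hG s.isCycle mb ma h),
      fun h => s.ac (cls_support hG s.isCycle mc ma h)⟩,
      fun h => s.da.ne' (cls_support hG s.isCycle md ma h)⟩
  rw [← s.rho hG hx mb, ← s.rho hG hx mc, ← s.rho hG hx md, hF]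
  unfold Cactus.rho
  rw [Finset.sum_insert hna, Finset.sum_union, Finset.sum_union (hdis mb mc s.bc.ne)]
  · ring
  · rw [Finset.disjoint_union_left]
    exact ⟨hdis mb md s.bd, hdis mc md s.cd.ne⟩

/-- If two adjacent corners of a square of a maximal cactus carry something, then so does the
corner after them: otherwise the load of the first corner should be moved to the corner
opposite to the second. -/
lemma IsMax.ext_next (hm : IsMax G) {a b c d : V} (s : Sq G a b c d) (ha : Ext G a b d)
    (hb : Ext G b a c) : Ext G c b d := by
  have hG := hm.cactus
  have ma : a ∈ s.walk.support := by simp [s.mem_support]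
  have mb : b ∈ s.walk.support := by simp [s.mem_support]
  have mc : c ∈ s.walk.support := by simp [s.mem_support]
  have md : d ∈ s.walk.support := by simp [s.mem_support]
  have key := hm.rho_le (cls_cut hG s.isCycle ma) ((s.ext_iff).1 ha) (w := d)
    (fun h => s.da.ne (cls_support hG s.isCycle ma md h))
  have e1 := s.numGeo hG
  have e2 := s.rot.numGeo hG
  rw [s.rho_far hG ma, s.rho_far hG md, numGeo_self, numGeo_self, numGeodesics_comm G d b,
    e1, e2, numGeo_adj hG.1 s.ab, numGeo_adj hG.1 s.da, numGeo_adj hG.1 s.da.symm,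
    numGeo_adj hG.1 s.cd.symm] at key
  have hone : ∀ v x, x ∈ cls s.walk v → x ≠ v → 2 ≤ Cactus.rho G (cls s.walk v) v := by
    intro v x hx hxv
    unfold Cactus.rho
    rw [← Finset.add_sum_erase _ _ (self_mem_cls s.walk v), numGeo_self]
    have h1 := Finset.single_le_sum (f := fun y => numGeodesics G v y)
      (fun _ _ => Nat.zero_le _) (Finset.mem_erase.2 ⟨hxv, hx⟩)
    have h2 := numGeo_pos hG.1 v x
    omega
  have hrot : ∀ v, cls s.rot.walk v = cls s.walk v := cls_congr fun e => by
    rw [s.mem_edges, s.rot.mem_edges]; tauto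
  have hrot2 : ∀ v, cls s.rot.rot.walk v = cls s.walk v := cls_congr fun e => by
    rw [s.mem_edges, s.rot.rot.mem_edges]; tauto
  have hb' : Ext G b c a := by obtain ⟨y, h1, h2, h3⟩ := hb; exact ⟨y, h1, h3, h2⟩
  obtain ⟨x, hx, hxb⟩ := (s.rot.ext_iff).1 hb'
  rw [hrot] at hx
  have h2 := hone b x hx hxb
  suffices Ext G c d b by obtain ⟨y, h1, h2, h3⟩ := this; exact ⟨y, h1, h3, h2⟩
  rw [s.rot.rot.ext_iff, hrot2]
  by_contra! hno
  have : cls s.walk c = {c} := by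
    ext z
    rw [Finset.mem_singleton]
    exact ⟨hno z, fun h => by rw [h]; exact self_mem_cls _ _⟩
  have h3 : Cactus.rho G (cls s.walk c) c = 1 := by
    rw [this, Cactus.rho, Finset.sum_singleton, numGeo_self]
  omega

/-- No two adjacent corners of a square of a maximal cactus carry something: after sliding the
load of `a` to `b`, the corners `b` and `c` still carry something but `a` does not. -/
lemma IsMax.not_ext (hm : IsMax G) {a b c d : V} (s : Sq G a b c d) (ha : Ext G a b d)
    (hb : Ext G b a c) : False := by
  have hG := hm.cactus
  have ma : a ∈ s.walk.support := by simp [s.mem_support]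
  have mb : b ∈ s.walk.support := by simp [s.mem_support]
  have mc : c ∈ s.walk.support := by simp [s.mem_support]
  have md : d ∈ s.walk.support := by simp [s.mem_support]
  have hc := hm.ext_next s ha hb
  have hb' : Ext G b c a := by obtain ⟨y, h1, h2, h3⟩ := hb; exact ⟨y, h1, h3, h2⟩
  have hc' : Ext G c d b := by obtain ⟨y, h1, h2, h3⟩ := hc; exact ⟨y, h1, h3, h2⟩
  have hrot : ∀ v, cls s.rot.walk v = cls s.walk v := cls_congr fun e => by
    rw [s.mem_edges, s.rot.mem_edges]; tauto
  have hcutA := cls_cut hG s.isCycle ma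
  have hcutB := cls_cut hG s.isCycle mb
  have hbA : b ∉ cls s.walk a := fun h => s.ab.ne' (cls_support hG s.isCycle ma mb h)
  have hcA : c ∉ cls s.walk a := fun h => s.ac.symm (cls_support hG s.isCycle ma mc h)
  have hdA : d ∉ cls s.walk a := fun h => s.da.ne (cls_support hG s.isCycle ma md h)
  have hm' := hm.slide hcutA hcutB (Finset.disjoint_left.2 fun z h1 h2 =>
      s.ab.ne (cls_inj hG s.isCycle ma mb h1 h2)) ((s.ext_iff).1 ha)
    (by have := (s.rot.ext_iff).1 hb'; rwa [hrot] at this) (numGeo_adj hG.1 s.ab)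
  set S := cls s.walk a with hS
  have hfar : ∀ {z}, z ∉ S → z ∈ (S.erase a)ᶜ := fun h => by
    simp only [Finset.mem_compl, Finset.mem_erase, not_and]; exact fun _ => h
  have faa : a ∈ (S.erase a)ᶜ := by simp
  have fb := hfar hbA
  have fc := hfar hcA
  have fd := hfar hdA
  have hadj : ∀ {x y}, x ∈ (S.erase a)ᶜ → y ∈ (S.erase a)ᶜ → G.Adj x y →
      (Cactus.move G S a b).Adj x y := fun hx hy h => (move_adj_far hx hy).1 h
  have s' : Sq (Cactus.move G S a b) a b c d :=
    ⟨hadj faa fb s.ab, hadj fb fc s.bc, hadj fc fd s.cd, hadj fd faa s.da, s.ac, s.bd⟩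
  have hkeep : ∀ x y, x ∉ S → x ≠ a → G.Adj x y → y ∈ (S.erase a)ᶜ := by
    intro x y hx hxa hxy
    simp only [Finset.mem_compl, Finset.mem_erase, not_and]
    exact fun hya hyS => hya (hcutA.adj y hyS x hx hxy.symm)
  obtain ⟨y, hy, hy1, hy2⟩ := hb
  obtain ⟨z, hz, hz1, hz2⟩ := hc
  obtain ⟨t, ht, ht1, ht2⟩ := hm'.ext_next s'.rot.flip
    ⟨z, hadj fc (hkeep c z hcA s.ac.symm hz) hz, hz1, hz2⟩
    ⟨y, hadj fb (hkeep b y hbA s.ab.ne' hy) hy, hy2, hy1⟩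
  have htf : t ∈ (S.erase a)ᶜ := by
    by_contra hn
    have htS : t ∈ insert b (S.erase a) := Finset.mem_insert_of_mem (by simpa using hn)
    refine ht1 (move_cut.adj t htS a ?_ ht.symm)
    simp [s.ab.ne]
  have ht' := (move_adj_far faa htf).2 ht
  have : t ∈ S := by
    refine cls_step (self_mem_cls _ a) ht' ?_
    rw [s.mem_edges]
    have := ht'.ne
    have h2 := s.ab.ne
    have h3 := s.da.ne
    have h4 := s.ac
    simp only [Sym2.eq_iff]
    grind
  exact ht'.ne (sep t this htf).symm

lemma ext_of_active {a : V} (b d : V) (h : IsActiveVertex G a) :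
    Ext G a b d := by
  by_contra hno
  unfold Ext at hno
  push Not at hno
  have : G.neighborSet a ⊆ {b, d} := fun y hy => by
    by_cases hyb : y = b
    · simp [hyb]
    · simp [hno y hy hyb]
  have h1 := Set.ncard_le_ncard this
  have h2 := Set.ncard_insert_le b {d}
  rw [Set.ncard_singleton] at h2
  have := h.2
  omega

/-- A maximal cactus is antipodal. -/
lemma IsMax.antipodal (hm : IsMax G) : IsAntipodalCactus G := by
  refine ⟨hm.cactus, hm.girth, ?_⟩
  rintro u p hp hl ⟨x, y, hxy, hx, hy, hax, hay⟩
  obtain ⟨b, c, d, s, hs, he⟩ := exists_sq hp hl hx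
  have ea := ext_of_active b d hax
  have nb : ¬ IsActiveVertex G b := fun h => by
    obtain ⟨y, h1, h2, h3⟩ := ext_of_active c x h
    exact hm.not_ext s ea ⟨y, h1, h3, h2⟩
  have nd : ¬ IsActiveVertex G d := fun h => by
    obtain ⟨y, h1, h2, h3⟩ := ext_of_active x c h
    exact hm.not_ext s.rot.rot.rot ⟨y, h1, h2, h3⟩ (by
      obtain ⟨z, h1, h2, h3⟩ := ea; exact ⟨z, h1, h3, h2⟩)
  have hyc : y = c := by
    rcases (s.mem_support y).1 ((hs y).1 hy) with rfl | rfl | rfl | rfl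
    · exact absurd rfl hxy
    · exact absurd hay nb
    · rfl
    · exact absurd hay nd
  subst hyc
  refine ⟨x, y, hxy, hx, hy, hax, hay, ?_, ?_⟩
  · rw [he, s.mem_edges]
    have h1 := s.ab.ne
    have h2 := s.bc.ne
    have h3 := s.cd.ne
    have h4 := s.da.ne
    simp only [Sym2.eq_iff]
    grind
  · intro z hz haz
    rcases (s.mem_support z).1 ((hs z).1 hz) with rfl | rfl | rfl | rfl
    · exact Or.inl rfl
    · exact absurd haz nb
    · exact Or.inr rfl
    · exact absurd haz nd

end Squares

/-! ### Unipath structures of a maximal cactus -/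

section Unipath

variable {G : SimpleGraph V}

lemma mem_desc_iff {x t y : V} : y ∈ desc G x t ↔ G.Adj x y ∧ G.dist y t + 1 = G.dist x t := by
  simp [desc]

lemma reach_cyc {u v w : V} {c : G.Walk w w} (hc : c.IsCycle) (hl : c.length = 4)
    (hr : (G.deleteEdges (squareEdges G)).Reachable u v) :
    (G.deleteEdges {e | e ∈ c.edges}).Reachable u v := by
  have : {e | e ∈ c.edges} ⊆ squareEdges G := fun e he => ⟨w, c, hc, hl, he⟩
  exact hr.mono (deleteEdges_anti this)

/-- Two vertices of one component of `G - E_S` are joined by a single geodesic. Indeed the next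
vertex after `u` on a geodesic to `v` is unique: two choices `y` and `z` would put the edge `u y` on
a cycle, which is a triangle as `u y` is not on a square. If `v` hangs at its corner `u`, then `u`
is nearer to `v` than `y`; if at `y`, then `z` is farther from `v` than `y`; and if at the third
corner, then `u` and `y` are at the same distance from `v`. -/
lemma numGeo_unipath (hG : IsCactus G) (hg : IsGirthRestricted G) {v : V} :
    ∀ (n : ℕ) (u : V), G.dist u v = n → (G.deleteEdges (squareEdges G)).Reachable u v →
      numGeodesics G u v = 1 := by
  intro n
  induction n with
  | zero =>
    intro u hd _
    rw [(hG.1 u v).dist_eq_zero_iff.1 hd, numGeo_self]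
  | succ n ih =>
    intro u hd hr
    have huv : u ≠ v := by rintro rfl; simp at hd
    have hE : ∀ y ∈ desc G u v, s(u, y) ∉ squareEdges G := by
      rintro y hy ⟨w, c, hc, hl, he⟩
      obtain ⟨hay, hdy⟩ := mem_desc_iff.1 hy
      have hu := c.fst_mem_support_of_mem_edges he
      have hyc := c.snd_mem_support_of_mem_edges he
      have hv : v ∈ cls c u := by
        exact mem_cls.2 (reach_cyc hc hl hr)
      have := (cls_cut hG hc hu).dist hG.1 hv (fun h => cls_support hG hc hu hyc h)
      rw [SimpleGraph.dist_comm, this, SimpleGraph.dist_comm (u := v)] at hdy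
      omega
    have h1 : ∀ y ∈ desc G u v, numGeodesics G y v = 1 := by
      intro y hy
      obtain ⟨hay, hdy⟩ := mem_desc_iff.1 hy
      refine ih y (by omega) (Reachable.trans (Adj.reachable ?_) hr)
      rw [deleteEdges_adj, Sym2.eq_swap]
      exact ⟨hay.symm, hE y hy⟩
    have huniq : ∀ y ∈ desc G u v, ∀ z ∈ desc G u v, y = z := by
      intro y hy z hz
      by_contra hyz
      obtain ⟨hay, hdy⟩ := mem_desc_iff.1 hy
      obtain ⟨haz, hdz⟩ := mem_desc_iff.1 hz
      have hp : ∀ y', G.dist y' v + 1 = G.dist u v → ∃ p : G.Walk y' v, u ∉ p.support := by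
        intro y' hdy'
        obtain ⟨p, hp⟩ := (hG.1 y' v).exists_walk_length_eq_dist
        refine ⟨p, fun hu => ?_⟩
        have h2 := dist_le (p.dropUntil u hu)
        have h3 := p.length_dropUntil_le_length hu
        omega
      obtain ⟨p, hpu⟩ := hp y hdy
      obtain ⟨q, hqu⟩ := hp z hdz
      obtain ⟨w, d, hd', hde, -⟩ := cycle_of_walk hay (p.append (q.reverse.append
        (Walk.cons haz.symm Walk.nil))) (by
          simp only [Walk.edges_append, Walk.edges_reverse, Walk.edges_cons, Walk.edges_nil,
            List.mem_append, List.mem_reverse, List.mem_singleton, not_or]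
          refine ⟨fun h => hpu (p.fst_mem_support_of_mem_edges h),
            fun h => hqu (q.fst_mem_support_of_mem_edges h), fun h => ?_⟩
          rw [Sym2.eq_iff] at h
          rcases h with ⟨h, -⟩ | ⟨-, h⟩
          · exact haz.ne h
          · exact hyz h)
      have hl : d.length = 3 := (hg w d hd').resolve_right fun h => hE y hy ⟨w, d, hd', h, hde⟩
      have hus := d.fst_mem_support_of_mem_edges hde
      have hys := d.snd_mem_support_of_mem_edges hde
      obtain ⟨t, hts, hvt⟩ := cls_cover hG.1 d v
      have hcut := cls_cut hG hd' hts
      have hdist : ∀ x ∈ d.support, G.dist v x = G.dist v t + G.dist t x := fun x hx =>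
        hcut.dist hG.1 hvt (fun h => cls_support hG hd' hts hx h)
      have hdu := hdist u hus
      have hdy' := hdist y hys
      rw [SimpleGraph.dist_comm] at hdu hdy'
      by_cases htu : t = u
      · subst htu; rw [SimpleGraph.dist_comm (u := v)] at hdy'; omega
      by_cases hty : t = y
      · subst hty
        by_cases hzc : z ∈ cls d t
        · exact hyz (hcut.adj z hzc u (fun h => htu (cls_support hG hd' hts hus h).symm)
            haz.symm).symm
        · have h2 := hcut.dist hG.1 hvt (fun h => absurd h hzc)
          have h3 := hG.1.pos_dist_of_ne hyz
          rw [SimpleGraph.dist_comm, SimpleGraph.dist_comm (u := v)] at h2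
          omega
      · obtain ⟨a, b, hab, ha, hb⟩ := cycle_two_nbrs hd' hts
        have hall : ∀ x ∈ d.support, x = t ∨ x = u ∨ x = y := by
          intro x hx
          by_contra! hno
          have hsub : ({x, t, u, y} : Finset V) ⊆ d.support.toFinset := by
            intro i hi
            simp only [Finset.mem_insert, Finset.mem_singleton] at hi
            rw [List.mem_toFinset]
            rcases hi with rfl | rfl | rfl | rfl <;> assumption
          have h4 := Finset.card_le_card hsub
          rw [card_support hd', hl, Finset.card_insert_of_notMem, Finset.card_insert_of_notMem,
            Finset.card_pair hay.ne] at h4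
          · omega
          · simp [htu, hty]
          · simpa using hno
        have haa := d.adj_of_mem_edges ha
        have hab' := d.adj_of_mem_edges hb
        have h5 := hall a (d.snd_mem_support_of_mem_edges ha)
        have h6 := hall b (d.snd_mem_support_of_mem_edges hb)
        have h7 : G.Adj t u ∧ G.Adj t y := by
          have := haa.ne'
          have := hab'.ne'
          grind
        rw [dist_eq_one_iff_adj.2 h7.1] at hdu
        rw [dist_eq_one_iff_adj.2 h7.2] at hdy'
        omega
    obtain ⟨y, hy⟩ := desc_nonempty hG.1 huv
    rw [numGeo_rec hG.1 huv, Finset.sum_congr rfl h1]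
    have : desc G u v = {y} := by
      ext z
      rw [Finset.mem_singleton]
      exact ⟨fun h => huniq z h y hy, fun h => by rw [h]; exact hy⟩
    rw [this, Finset.sum_singleton]

variable {w₁ w₂ : V} {c₁ : G.Walk w₁ w₁} {c₂ : G.Walk w₂ w₂}

/-- The part of `G` hanging at `u₁` behind the cycle `c₁` lies on the side of `u₂` with respect
to another cycle `c₂`, if `u₁` and `u₂` are joined off both cycles. -/
lemma far_subset (hG : IsCactus G) (h₁ : c₁.IsCycle) (hne : ∀ e ∈ c₁.edges, e ∉ c₂.edges)
    {u₁ u₂ x : V} (hu₁ : u₁ ∈ c₁.support) (hu₂ : u₂ ∈ c₂.support)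
    (hr : (G.deleteEdges {e | e ∈ c₁.edges ∨ e ∈ c₂.edges}).Reachable u₁ u₂)
    (hx : x ∈ ((cls c₁ u₁).erase u₁)ᶜ) : x ∈ cls c₂ u₂ := by
  have hr2 : u₁ ∈ cls c₂ u₂ :=
    mem_cls.2 (hr.mono (deleteEdges_anti fun e he => Or.inr he)).symm
  by_cases hxu : x = u₁
  · rwa [hxu]
  have hx' : x ∉ cls c₁ u₁ := by
    simpa [hxu] using hx
  have hcut := cls_cut hG h₁ hu₁
  have hu2 : u₂ ∈ cls c₁ u₁ := mem_cls.2 (hr.mono (deleteEdges_anti fun e he => Or.inl he))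
  have hsupp : ∀ a ∈ c₂.support, a ∈ cls c₁ u₁ := by
    intro a ha
    rw [mem_cls] at hu2 ⊢
    refine hu2.trans (reach_del.2 ⟨(c₂.rotate u₂ hu₂).takeUntil a
      (by rwa [Walk.mem_support_rotate_iff]), fun e he he' => hne e he' ?_⟩)
    exact (mem_edges_rotate hu₂ e).1 (Walk.edges_takeUntil_subset_edges _ _ he)
  rw [mem_cls] at hr2 ⊢
  refine hr2.trans (Reachable.symm ?_)
  obtain ⟨p, hp⟩ := (hG.1 x u₁).exists_isPath
  refine reach_del.2 ⟨p, fun e he he2 => ?_⟩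
  induction e using Sym2.ind with | _ a b =>
  have key : ∀ a ∈ p.support, a ∈ cls c₁ u₁ → a = u₁ := by
    intro a hap hac
    by_contra hau
    refine Walk.endpoint_notMem_support_takeUntil hp hap (Ne.symm hau) ?_
    refine hcut.compl.mem_support _ hx (by simp [hau, hac])
  have ha := key a (p.fst_mem_support_of_mem_edges he)
    (hsupp a (c₂.fst_mem_support_of_mem_edges he2))
  have hb := key b (p.snd_mem_support_of_mem_edges he)
    (hsupp b (c₂.snd_mem_support_of_mem_edges he2))
  exact (p.adj_of_mem_edges he).ne (ha.trans hb.symm)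

lemma far_inter (hG : IsCactus G) (h₁ : c₁.IsCycle) (h₂ : c₂.IsCycle)
    (hne : ∀ e ∈ c₁.edges, e ∉ c₂.edges)
    {u₁ u₂ x : V} (hu₁ : u₁ ∈ c₁.support) (hu₂ : u₂ ∈ c₂.support)
    (hr : (G.deleteEdges {e | e ∈ c₁.edges ∨ e ∈ c₂.edges}).Reachable u₁ u₂)
    (hx₁ : x ∈ ((cls c₁ u₁).erase u₁)ᶜ) (hx₂ : x ∈ ((cls c₂ u₂).erase u₂)ᶜ) :
    x = u₁ ∧ x = u₂ := by
  have hr' : (G.deleteEdges {e | e ∈ c₂.edges ∨ e ∈ c₁.edges}).Reachable u₂ u₁ :=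
    hr.symm.mono (deleteEdges_anti fun e he => Or.symm he)
  exact ⟨sep x (far_subset hG h₂ (fun e h h' => hne e h' h) hu₂ hu₁ hr' hx₂) hx₁,
    sep x (far_subset hG h₁ hne hu₁ hu₂ hr hx₁) hx₂⟩

/-- The corner opposite to `u` on a square. -/
lemma exists_far (hG : IsCactus G) (h₁ : c₁.IsCycle) (hl : c₁.length = 4) {u : V}
    (hu : u ∈ c₁.support) :
    ∃ o ∈ ((cls c₁ u).erase u)ᶜ, o ≠ u ∧ 2 ≤ numGeodesics G o u := by
  obtain ⟨b, o, d, s, hs, -⟩ := exists_sq h₁ hl hu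
  refine ⟨o, ?_, s.ac.symm, by rw [numGeodesics_comm]; exact (s.numGeo hG).ge⟩
  simp only [Finset.mem_compl, Finset.mem_erase, not_and]
  exact fun h h' => h (cls_support hG h₁ hu ((hs o).2 (by simp [s.mem_support])) h')

/-- A vertex on two squares of a maximal cactus has no further edge. -/
lemma IsMax.two_squares (hm : IsMax G) (h₁ : c₁.IsCycle) (h₂ : c₂.IsCycle) (hl₁ : c₁.length = 4)
    (hl₂ : c₂.length = 4) (hne : ∀ e ∈ c₁.edges, e ∉ c₂.edges) {u y : V}
    (hu₁ : u ∈ c₁.support) (hu₂ : u ∈ c₂.support) (hy : G.Adj u y) (hy₁ : s(u, y) ∉ c₁.edges)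
    (hy₂ : s(u, y) ∉ c₂.edges) : False := by
  have hG := hm.cactus
  obtain ⟨o₁, ho₁, -, hg₁⟩ := exists_far hG h₁ hl₁ hu₁
  obtain ⟨o₂, ho₂, -, hg₂⟩ := exists_far hG h₂ hl₂ hu₂
  rcases hm.no_third (cls_cut hG h₁ hu₁).compl (cls_cut hG h₂ hu₂).compl
    (fun x hx hx' => (far_inter hG h₁ h₂ hne hu₁ hu₂ (Reachable.refl _) hx hx').1)
    ho₁ hg₁ ho₂ hg₂ y with h | h
  · exact hy.ne' (sep y (cls_step (self_mem_cls c₁ u) hy hy₁) h)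
  · exact hy.ne' (sep y (cls_step (self_mem_cls c₂ u) hy hy₂) h)

/-- Two vertices on squares of a maximal cactus do not lie in a common component of `G - E_S`:
sliding one square along the component to the other vertex keeps maximality and
creates a vertex on two squares which has a further edge. -/
lemma IsMax.squared_unique (hm : IsMax G) (h₁ : c₁.IsCycle) (h₂ : c₂.IsCycle)
    (hl₁ : c₁.length = 4) (hl₂ : c₂.length = 4) {u₁ u₂ : V}
    (hu₁ : u₁ ∈ c₁.support) (hu₂ : u₂ ∈ c₂.support)
    (hr : (G.deleteEdges (squareEdges G)).Reachable u₁ u₂) : u₁ = u₂ := by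
  by_contra hu
  have hG := hm.cactus
  have hne : ∀ e ∈ c₁.edges, e ∉ c₂.edges := by
    intro e he he'
    obtain ⟨a, -, -, ha, -⟩ := cycle_two_nbrs h₂ hu₂
    refine not_reach hG h₁ hu₁ (c₁.fst_mem_support_of_mem_edges
      ((edges_eq hG h₁ h₂ he he' _).2 ha)) hu ?_
    exact reach_cyc h₁ hl₁ hr
  have hr' : (G.deleteEdges {e | e ∈ c₁.edges ∨ e ∈ c₂.edges}).Reachable u₁ u₂ := by
    refine hr.mono (deleteEdges_anti fun e he => ?_)
    rcases he with he | he
    exacts [⟨w₁, c₁, h₁, hl₁, he⟩, ⟨w₂, c₂, h₂, hl₂, he⟩]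
  obtain ⟨o₁, ho₁, hn₁, hg₁⟩ := exists_far hG h₁ hl₁ hu₁
  obtain ⟨o₂, ho₂, hn₂, hg₂⟩ := exists_far hG h₂ hl₂ hu₂
  have hS₁ := (cls_cut hG h₁ hu₁).compl
  have hS₂ := (cls_cut hG h₂ hu₂).compl
  have hdis : ∀ x, x ∈ ((cls c₁ u₁).erase u₁)ᶜ → x ∉ ((cls c₂ u₂).erase u₂)ᶜ := by
    intro x hx hx'
    obtain ⟨e1, e2⟩ := far_inter hG h₁ h₂ hne hu₁ hu₂ hr' hx hx'
    exact hu (e1.symm.trans e2)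
  generalize ((cls c₁ u₁).erase u₁)ᶜ = S₁ at *
  generalize ((cls c₂ u₂).erase u₂)ᶜ = S₂ at *
  have hm' := hm.slide hS₁ hS₂ (Finset.disjoint_left.2 hdis) ⟨o₁, ho₁, hn₁⟩ ⟨o₂, ho₂, hn₂⟩
    (numGeo_unipath hG hm.girth _ _ rfl hr)
  have hu₂S : u₂ ∉ S₁ := fun h => hdis _ h hS₂.mem
  have hfar : ∀ {z}, z ∈ S₂ → z ∈ (S₁.erase u₁)ᶜ := fun h => by
    simp only [Finset.mem_compl, Finset.mem_erase, not_and]; exact fun _ h' => hdis _ h' h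
  have hS₂' : IsCut (Cactus.move G S₁ u₁ u₂) u₂ S₂ := by
    refine ⟨hS₂.mem, fun x hx y hy hxy => ?_⟩
    by_contra hxu
    have hxN : x ∉ insert u₂ (S₁.erase u₁) := by
      simp only [Finset.mem_insert, not_or]
      exact ⟨hxu, Finset.mem_compl.1 (hfar hx)⟩
    have hyu : y ≠ u₂ := fun h => hy (h ▸ hS₂.mem)
    by_cases hyN : y ∈ insert u₂ (S₁.erase u₁)
    · exact hyu (move_cut.adj y hyN x hxN hxy.symm)
    · have hyf : y ∈ (S₁.erase u₁)ᶜ := by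
        simp only [Finset.mem_insert, not_or] at hyN
        exact Finset.mem_compl.2 hyN.2
      exact hxu (hS₂.adj x hx y hy ((move_adj_far (hfar hx) hyf).2 hxy))
  have hg₁' : 2 ≤ numGeodesics (Cactus.move G S₁ u₁ u₂) o₁ u₂ := by
    have := move_numGeo_near hG.1 hS₁ hu₂S ho₁ hS₁.mem
    rw [move_swap hu₂S (Finset.mem_erase.2 ⟨hn₁, ho₁⟩), Equiv.swap_apply_left] at this
    rwa [this]
  have hg₂' : 2 ≤ numGeodesics (Cactus.move G S₁ u₁ u₂) o₂ u₂ := by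
    rwa [move_numGeo_far hG.1 hS₁ hu₂S (hfar ho₂) (hfar hS₂.mem)]
  have hN : ∀ x ∈ insert u₂ (S₁.erase u₁), x ∈ S₂ → x = u₂ := by
    intro x hx hx'
    by_contra hxu
    exact hdis x (Finset.mem_of_mem_erase (Finset.mem_of_mem_insert_of_ne hx hxu)) hx'
  rcases hm'.no_third move_cut hS₂' hN
    (Finset.mem_insert_of_mem (Finset.mem_erase.2 ⟨hn₁, ho₁⟩)) hg₁' ho₂ hg₂' u₁ with h | h
  · simp [hu] at h
  · exact hdis _ hS₁.mem h

lemma mem_squaresOn {v : V} {s : Set (Sym2 V)} : s ∈ squaresOn G v ↔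
    ∃ (u : V) (c : G.Walk u u), c.IsCycle ∧ c.length = 4 ∧ v ∈ c.support ∧
      s = {e | e ∈ c.edges} := by
  constructor
  · rintro ⟨⟨u, c, hc, hl, rfl⟩, e, he, hv⟩
    obtain ⟨y, rfl⟩ := hv
    exact ⟨u, c, hc, hl, c.fst_mem_support_of_mem_edges he, rfl⟩
  · rintro ⟨u, c, hc, hl, hv, rfl⟩
    obtain ⟨a, -, -, ha, -⟩ := cycle_two_nbrs hc hv
    exact ⟨⟨u, c, hc, hl, rfl⟩, s(v, a), ha, by simp⟩

lemma edges_disjoint (hG : IsCactus G) (h₁ : c₁.IsCycle) (h₂ : c₂.IsCycle)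
    (h : {e | e ∈ c₁.edges} ≠ {e | e ∈ c₂.edges}) : ∀ e ∈ c₁.edges, e ∉ c₂.edges :=
  fun _ h1 h2 => h (Set.ext fun f => edges_eq hG h₁ h₂ h1 h2 f)

/-- A maximal cactus is a squared chain. -/
lemma IsMax.squaredChain (hm : IsMax G) : IsSquaredChain G := by
  have hG := hm.cactus
  refine ⟨⟨hm.antipodal, fun C hC => ⟨?_, ?_⟩⟩, fun v h2 => ?_⟩
  · rintro u₁ ⟨hC₁, w₁, c₁, h₁, hl₁, hu₁⟩ u₂ ⟨hC₂, w₂, c₂, h₂, hl₂, hu₂⟩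
    rw [ConnectedComponent.mem_supp_iff] at hC₁ hC₂
    exact hm.squared_unique h₁ h₂ hl₁ hl₂ hu₁ hu₂
      (ConnectedComponent.exact (hC₁.trans hC₂.symm))
  · rintro v hvC ⟨w₁, c₁, h₁, hl₁, hv₁⟩
    obtain ⟨y, hyv, hE⟩ : ∃ y, G.Adj v y ∧ s(v, y) ∉ squareEdges G := by
      obtain ⟨x, hxC, hxv⟩ := hC.exists_ne v
      rw [ConnectedComponent.mem_supp_iff] at hvC hxC
      obtain ⟨p⟩ := ConnectedComponent.exact (hvC.trans hxC.symm)
      cases p with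
      | nil => exact absurd rfl hxv
      | cons h p => exact ⟨_, (deleteEdges_adj.1 h).1, (deleteEdges_adj.1 h).2⟩
    refine Set.ncard_eq_one.2 ⟨{e | e ∈ c₁.edges}, Set.eq_singleton_iff_unique_mem.2
      ⟨mem_squaresOn.2 ⟨w₁, c₁, h₁, hl₁, hv₁, rfl⟩, fun s hs => ?_⟩⟩
    obtain ⟨w₂, c₂, h₂, hl₂, hv₂, rfl⟩ := mem_squaresOn.1 hs
    by_contra hne
    exact hm.two_squares h₁ h₂ hl₁ hl₂ (edges_disjoint hG h₁ h₂ (Ne.symm hne)) hv₁ hv₂ hyv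
      (fun h => hE ⟨w₁, c₁, h₁, hl₁, h⟩) (fun h => hE ⟨w₂, c₂, h₂, hl₂, h⟩)
  · by_contra hn
    obtain ⟨s₁, hs₁, s₂, hs₂, s₃, hs₃, h12, h13, h23⟩ :=
      (Set.two_lt_ncard (Set.toFinite _)).1 (lt_of_le_of_ne h2 (Ne.symm hn))
    obtain ⟨w₁, c₁, h₁, hl₁, hv₁, rfl⟩ := mem_squaresOn.1 hs₁
    obtain ⟨w₂, c₂, h₂, hl₂, hv₂, rfl⟩ := mem_squaresOn.1 hs₂
    obtain ⟨w₃, c₃, h₃, hl₃, hv₃, rfl⟩ := mem_squaresOn.1 hs₃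
    obtain ⟨a, -, -, ha, -⟩ := cycle_two_nbrs h₃ hv₃
    exact hm.two_squares h₁ h₂ hl₁ hl₂ (edges_disjoint hG h₁ h₂ h12) hv₁ hv₂
      (c₃.adj_of_mem_edges ha) (fun h => edges_disjoint hG h₁ h₃ h13 _ h ha)
      (fun h => edges_disjoint hG h₂ h₃ h23 _ h ha)

lemma T_eq_gpn (G : SimpleGraph V) : T G + Fintype.card V = 2 * gpn G := by
  have hdiag : T G = Fintype.card V +
      ∑ p ∈ (Finset.univ : Finset V).offDiag, numGeodesics G p.1 p.2 := by
    have h1 : T G = ∑ p ∈ (Finset.univ : Finset V) ×ˢ (Finset.univ : Finset V),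
        numGeodesics G p.1 p.2 := by
      rw [Finset.sum_product]; rfl
    rw [h1, ← Finset.diag_union_offDiag, Finset.sum_union (Finset.disjoint_diag_offDiag _),
      Finset.sum_diag]
    simp [numGeo_self]
  have hoff : ∑ p ∈ (Finset.univ : Finset V).offDiag, numGeodesics G p.1 p.2 =
      2 * ∑ e ∈ Finset.univ.filter (fun e : Sym2 V => ¬ e.IsDiag),
        Sym2.lift ⟨fun u v => numGeodesics G u v, fun u v => numGeodesics_comm G u v⟩ e := by
    rw [← Finset.sum_fiberwise_of_maps_to (g := fun p : V × V => s(p.1, p.2))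
      (t := Finset.univ.filter (fun e : Sym2 V => ¬ e.IsDiag)) (by
        rintro ⟨a, b⟩ hab
        simpa using hab), Finset.mul_sum]
    refine Finset.sum_congr rfl fun e he => ?_
    induction e using Sym2.ind with | _ a b =>
    have hab : a ≠ b := by simpa using he
    have : (Finset.univ : Finset V).offDiag.filter (fun p : V × V => s(p.1, p.2) = s(a, b)) =
        {(a, b), (b, a)} := by
      ext ⟨x, y⟩
      simp only [Finset.mem_filter, Finset.mem_offDiag, Finset.mem_univ, true_and, Sym2.eq_iff,
        Finset.mem_insert, Finset.mem_singleton, Prod.mk.injEq]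
      constructor
      · exact fun h => h.2
      · rintro (⟨rfl, rfl⟩ | ⟨rfl, rfl⟩)
        exacts [⟨hab, by simp⟩, ⟨hab.symm, by simp⟩]
    rw [this, Finset.sum_pair (by simp [hab]), Sym2.lift_mk, numGeodesics_comm G b a]
    simp only
    omega
  unfold gpn
  omega

end Unipath

end Cactus

/-- if a cactus `G` on `n` vertices with `k` cycles is not a squared chain,
then some squared chain `G'` on `n` vertices with `k` cycles has a strictly larger
geodesic subpath number. -/
theorem cactus_not_squaredChain_not_maximal {V : Type*} [Fintype V] [DecidableEq V]
    (G : SimpleGraph V) (k : ℕ) (hG : IsCactus G) (hk : (cycleEdgeSets G).ncard = k)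
    (hns : ¬ IsSquaredChain G) :
    ∃ G' : SimpleGraph V, IsSquaredChain G' ∧
      (cycleEdgeSets G').ncard = k ∧ gpn G < gpn G' := by
  obtain ⟨M, ⟨hM, hMk⟩, hmax⟩ := Set.exists_max_image
    {G' : SimpleGraph V | IsCactus G' ∧ (cycleEdgeSets G').ncard = k} Cactus.T
    (Set.toFinite _) ⟨G, hG, hk⟩
  have hMm : Cactus.IsMax M := ⟨hM, fun G' h h' => hmax G' ⟨h, h'.trans hMk⟩⟩
  refine ⟨M, hMm.squaredChain, hMk, ?_⟩
  by_contra! hle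
  have h1 := Cactus.T_eq_gpn G
  have h2 := Cactus.T_eq_gpn M
  exact hns (hMm.of_T_eq hG (hk.trans hMk.symm) (by omega)).squaredChain
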